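/- arXiv:1910.03745 — 2 statements merged into one kernel-verified Lean document; each statement's English description precedes it below -/
import Mathlib

section
/- Fix ℓ ≥ 3 and let (G,c) be an n-vertex edge-minimal edge-colored graph with no rainbow ℓ-cycle. Let (z,ζ) achieve |N_ζ(z)| = R (the replication number), and let Y be the set of vertices y admitting an (ℓ−1)-vertex rainbow z–y path avoiding the color ζ. If Y is nonempty, then δ^c(G) ≤ n/2 + max{0, 3ℓ + (R−1)·((n+1)/(2|Y|) − 1)}. -/
open Finset

variable {V : Type*}

/-- Number of distinct colors on edges incident to `v`. -/
noncomputable def colorDeg (G : SimpleGraph V) (c : Sym2 V → ℕ) (v : V) : ℕ :=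
  Set.ncard {α : ℕ | ∃ u, G.Adj u v ∧ c s(u, v) = α}

/-- Number of distinct colors `c({u,v})` over `u ∈ N(v) ∩ U`. -/
noncomputable def colorDegOn (G : SimpleGraph V) (c : Sym2 V → ℕ) (v : V) (U : Set V) : ℕ :=
  Set.ncard {α : ℕ | ∃ u ∈ U, G.Adj u v ∧ c s(u, v) = α}

/-- Minimum color-degree `δ^c(G)`. -/
noncomputable def minColorDeg (G : SimpleGraph V) (c : Sym2 V → ℕ) : ℕ :=
  ⨅ v : V, colorDeg G c v

/-- `(G,c)` is edge-minimal: no proper spanning subgraph has the same minimum color-degree. -/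
def EdgeMinimal (G : SimpleGraph V) (c : Sym2 V → ℕ) : Prop :=
  ∀ H : SimpleGraph V, H ≤ G → H ≠ G → minColorDeg H c ≠ minColorDeg G c

/-- `(G,c)` contains a rainbow cycle on `ℓ` vertices. -/
def HasRainbowCycle (G : SimpleGraph V) (c : Sym2 V → ℕ) (ℓ : ℕ) : Prop :=
  ∃ (u : V) (p : G.Walk u u), p.IsCycle ∧ p.length = ℓ ∧ (p.edges.map c).Nodup

/-- There is a rainbow path from `v` to `y` on `k` vertices whose edge colors avoid `C`. -/
def RainbowPathAvoiding (G : SimpleGraph V) (c : Sym2 V → ℕ) (v y : V) (k : ℕ)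
    (C : Set ℕ) : Prop :=
  ∃ p : G.Walk v y, p.IsPath ∧ p.length + 1 = k ∧ (p.edges.map c).Nodup ∧
    ∀ e ∈ p.edges, c e ∉ C

/-- `σ_{v,X}(y)`: the number of colors `X`-separating `y` from `v`. -/
noncomputable def sepCount (G : SimpleGraph V) (c : Sym2 V → ℕ) (v : V) (X : Set V)
    (y : V) : ℕ :=
  Set.ncard {α : ℕ | ∃ x ∈ X, G.Adj x y ∧ c s(x, y) = α ∧ c s(v, x) ≠ α}

/-- `ρ_{v,X}(y)`: the number of colors restricted for `y` by `(v,X)`. -/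
noncomputable def restrCount (G : SimpleGraph V) (c : Sym2 V → ℕ) (v : V) (X : Set V)
    (y : V) : ℕ :=
  Set.ncard {α : ℕ | (∃ x ∈ X, G.Adj x y ∧ c s(x, y) = α ∧ c s(v, x) ≠ α) ∧
    ∀ w, G.Adj w y → w ∉ X → c s(w, y) ≠ α}

/-- The replication number `R(G,c) = max_{v,α} |N_α(v)|`. -/
noncomputable def repNum (G : SimpleGraph V) (c : Sym2 V → ℕ) : ℕ :=
  ⨆ v : V, ⨆ α : ℕ, Set.ncard {u : V | G.Adj u v ∧ c s(u, v) = α}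

/-- `N_!(v)`: neighbors `u` of `v` whose color `c({u,v})` appears on exactly one edge at `v`. -/
def bangNbhd (G : SimpleGraph V) (c : Sym2 V → ℕ) (v : V) : Set V :=
  {u : V | G.Adj u v ∧ Set.ncard {w : V | G.Adj w v ∧ c s(w, v) = c s(u, v)} = 1}

/-!
Consider a rainbow `z`–`y` path avoiding `ζ`, and a common neighbor `u` of `z` and `y` off the path,
joined to them by colors not on the path. If these two colors differed, there would be a rainbow
`ℓ`-cycle. So, up to `O(ℓ)` exceptions, the common neighbors `u` satisfy `c(uz) = c(uy)`, and since
`z` has at least `d^c(z) + |N_ζ(z)| - 1` neighbors, there are at least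
`d^c(y) + d^c(z) + |N_ζ(z)| - n - 3ℓ` such `u`. By edge-minimality the color of `uz` is then unique
at `z`, so at most `d^c(z)` vertices `u` occur as `y` varies over `Y`, each for at most `R - 1`
vertices `y`. Double counting the pairs `(y, u)` bounds `δ^c`.
-/

/-- The color neighborhood `N_α(v)`. -/
def colorNbhd (G : SimpleGraph V) (c : Sym2 V → ℕ) (v : V) (α : ℕ) : Set V :=
  {u : V | G.Adj u v ∧ c s(u, v) = α}

/-- The neighbors of `v` along edges whose color is not in `C`. In the argument `C` consists of the
colors of a rainbow path. -/
def nbhdAvoiding (G : SimpleGraph V) (c : Sym2 V → ℕ) (v : V) (C : Finset ℕ) : Set V :=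
  {u : V | G.Adj u v ∧ c s(u, v) ∉ C}

/-- The common neighbors `u` of `z` and `y` for which the path `z u y` is monochromatic. The
main argument double counts the pairs `(y, u)` with `u` in this set. -/
def monoCommonNbhd (G : SimpleGraph V) (c : Sym2 V → ℕ) (z y : V) : Set V :=
  {u : V | G.Adj u z ∧ G.Adj u y ∧ c s(u, z) = c s(u, y)}

section

variable {G : SimpleGraph V} {c : Sym2 V → ℕ} {u y z : V} {e : Sym2 V} {k : ℕ}

lemma minColorDeg_le_colorDeg (G : SimpleGraph V) (c : Sym2 V → ℕ) (v : V) :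
    minColorDeg G c ≤ colorDeg G c v :=
  ciInf_le (OrderBot.bddBelow _) v

lemma colorDeg_deleteEdges_singleton
    (h : ∀ x ∈ e, ∃ w, G.Adj w x ∧ c s(w, x) = c e ∧ s(w, x) ≠ e) (v : V) :
    colorDeg (G.deleteEdges {e}) c v = colorDeg G c v := by
  unfold colorDeg
  congr 1
  ext α
  simp only [Set.mem_ofPred_eq, SimpleGraph.deleteEdges_adj, Set.mem_singleton_iff]
  constructor
  · rintro ⟨x, ⟨hx, -⟩, hα⟩
    exact ⟨x, hx, hα⟩
  · rintro ⟨x, hx, hα⟩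
    by_cases hxe : s(x, v) = e
    · obtain ⟨w, hw, hwc, hwe⟩ := h v (hxe ▸ Sym2.mem_mk_right x v)
      exact ⟨w, ⟨hw, hwe⟩, by rw [hwc, ← hxe, hα]⟩
    · exact ⟨x, ⟨hx, hxe⟩, hα⟩

lemma EdgeMinimal.exists_mem_forall_eq (hmin : EdgeMinimal G c) (he : e ∈ G.edgeSet) :
    ∃ v ∈ e, ∀ w, G.Adj w v → c s(w, v) = c e → s(w, v) = e := by
  by_contra! h
  refine hmin (G.deleteEdges {e}) (G.deleteEdges_le _) (fun heq ↦ ?_) ?_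
  · rw [← heq] at he
    simp at he
  · simp only [minColorDeg, colorDeg_deleteEdges_singleton h]

lemma EdgeMinimal.monoCommonNbhd_subset_bangNbhd (hmin : EdgeMinimal G c) (hzy : z ≠ y) :
    monoCommonNbhd G c z y ⊆ bangNbhd G c z := by
  rintro u ⟨huz, huy, hc⟩
  obtain ⟨v, hv, hunique⟩ := hmin.exists_mem_forall_eq (e := s(u, z)) huz
  rcases Sym2.mem_iff.1 hv with rfl | rfl
  · have hyz : s(y, v) = s(v, z) := hunique y huy.symm (by rw [Sym2.eq_swap, hc])
    rw [Sym2.eq_swap, Sym2.congr_right] at hyz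
    exact absurd hyz.symm hzy
  · refine ⟨huz, Set.ncard_eq_one.2 ⟨u, Set.eq_singleton_iff_unique_mem.2 ⟨⟨huz, rfl⟩, ?_⟩⟩⟩
    rintro w ⟨hw, hwc⟩
    exact Sym2.congr_left.1 (hunique w hw hwc)

lemma RainbowPathAvoiding.ne {C : Set ℕ} (h : RainbowPathAvoiding G c z y k C) (hk : 2 ≤ k) :
    z ≠ y := by
  obtain ⟨p, hp, hlen, -⟩ := h
  rintro rfl
  have : p.length = 0 :=
    SimpleGraph.Walk.length_eq_zero_iff.2 (SimpleGraph.Walk.isPath_iff_nil.1 hp)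
  omega

lemma hasRainbowCycle_of_isPath {p : G.Walk z y} (hp : p.IsPath)
    (hrainbow : (p.edges.map c).Nodup) (hu : u ∉ p.support) (huz : G.Adj u z) (huy : G.Adj u y)
    (hcz : c s(u, z) ∉ p.edges.map c) (hcy : c s(u, y) ∉ p.edges.map c)
    (hne : c s(u, z) ≠ c s(u, y)) : HasRainbowCycle G c (p.length + 2) := by
  let q : G.Walk u u := .cons huz (p.concat huy.symm)
  have hq : (q.edges.map c).Nodup := by
    have hconcat : ((p.edges.map c).concat (c s(u, y))).Nodup := hrainbow.concat hcy
    simp only [q, SimpleGraph.Walk.edges_cons, SimpleGraph.Walk.edges_concat, List.map_cons,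
      List.map_concat, List.nodup_cons, Sym2.eq_swap (a := y)]
    exact ⟨by simpa using ⟨by simpa using hcz, hne⟩, hconcat⟩
  refine ⟨u, q, (SimpleGraph.Walk.cons_isCycle_iff _ _).2 ⟨hp.concat hu _, ?_⟩, ?_, hq⟩
  · exact (List.nodup_cons.1 hq.of_map).1
  · simp [q]

lemma nbhdAvoiding_inter_subset {p : G.Walk z y} (hp : p.IsPath)
    (hrainbow : (p.edges.map c).Nodup) (hno : ¬ HasRainbowCycle G c (p.length + 2)) :
    nbhdAvoiding G c y (p.edges.map c).toFinset ∩ nbhdAvoiding G c z (p.edges.map c).toFinset ⊆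
      monoCommonNbhd G c z y ∪ {u | u ∈ p.support} := by
  rintro u ⟨⟨huy, hcy⟩, huz, hcz⟩
  rw [List.mem_toFinset] at hcy hcz
  by_contra hu
  simp only [Set.mem_union, not_or] at hu
  exact hno (hasRainbowCycle_of_isPath hp hrainbow hu.2 huz huy hcz hcy fun h ↦ hu.1 ⟨huz, huy, h⟩)

end

section

variable [Finite V] {G : SimpleGraph V} {c : Sym2 V → ℕ} {u v y z : V} {k ζ : ℕ}

lemma ncard_colorNbhd_le_repNum (G : SimpleGraph V) (c : Sym2 V → ℕ) (v : V) (α : ℕ) :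
    (colorNbhd G c v α).ncard ≤ repNum G c := by
  have hcard (w : V) (β : ℕ) : (colorNbhd G c w β).ncard ≤ Nat.card V := Set.ncard_le_card _
  exact le_ciSup_of_le ⟨Nat.card V, Set.forall_mem_range.2 fun w ↦ ciSup_le (hcard w)⟩ v <|
    le_ciSup (f := fun β ↦ (colorNbhd G c v β).ncard)
      ⟨Nat.card V, Set.forall_mem_range.2 (hcard v)⟩ α

lemma one_le_repNum_of_colorDeg_pos (h : 0 < colorDeg G c v) : 1 ≤ repNum G c := by
  obtain ⟨α, u, hu⟩ := Set.nonempty_of_ncard_ne_zero h.ne'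
  exact ((Set.ncard_pos (Set.toFinite _)).2 ⟨u, hu⟩).trans_le (ncard_colorNbhd_le_repNum G c v α)

lemma ncard_bangNbhd_le_colorDeg (G : SimpleGraph V) (c : Sym2 V → ℕ) (v : V) :
    (bangNbhd G c v).ncard ≤ colorDeg G c v := by
  refine Set.ncard_le_ncard_of_injOn (fun u ↦ c s(u, v)) (fun u hu ↦ ⟨u, hu.1, rfl⟩) ?_ ?_
  · rintro u ⟨hu, hcard⟩ w ⟨hw, -⟩ hc
    obtain ⟨x, hx⟩ := Set.ncard_eq_one.1 hcard
    have hux : u ∈ ({x} : Set V) := hx ▸ ⟨hu, rfl⟩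
    have hwx : w ∈ ({x} : Set V) := hx ▸ ⟨hw, hc.symm⟩
    exact hux.trans hwx.symm
  · exact (Set.finite_range fun u ↦ c s(u, v)).subset fun α ⟨u, _, hα⟩ ↦ ⟨u, hα⟩

lemma colorDeg_le_ncard_nbhdAvoiding_add_card (G : SimpleGraph V) (c : Sym2 V → ℕ) (v : V)
    (C : Finset ℕ) : colorDeg G c v ≤ (nbhdAvoiding G c v C).ncard + C.card := by
  have hsub : {α : ℕ | ∃ u, G.Adj u v ∧ c s(u, v) = α} ⊆
      (fun u ↦ c s(u, v)) '' nbhdAvoiding G c v C ∪ C := by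
    rintro _ ⟨u, hu, rfl⟩
    by_cases hC : c s(u, v) ∈ C
    · exact .inr hC
    · exact .inl ⟨u, ⟨hu, hC⟩, rfl⟩
  calc colorDeg G c v
      ≤ ((fun u ↦ c s(u, v)) '' nbhdAvoiding G c v C ∪ C).ncard :=
        Set.ncard_le_ncard hsub ((Set.toFinite _).union C.finite_toSet)
    _ ≤ ((fun u ↦ c s(u, v)) '' nbhdAvoiding G c v C).ncard + (C : Set ℕ).ncard :=
        Set.ncard_union_le _ _
    _ ≤ (nbhdAvoiding G c v C).ncard + C.card := by
        rw [Set.ncard_coe_finset]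
        gcongr
        exact Set.ncard_image_le

lemma colorDeg_add_ncard_colorNbhd_le {C : Finset ℕ} (hζ : ζ ∉ C) :
    colorDeg G c v + (colorNbhd G c v ζ).ncard ≤ (nbhdAvoiding G c v C).ncard + C.card + 1 := by
  have hdisj : Disjoint (nbhdAvoiding G c v (insert ζ C)) (colorNbhd G c v ζ) :=
    Set.disjoint_left.2 fun u hu hu' ↦ hu.2 (hu'.2 ▸ mem_insert_self ζ C)
  have hsub : nbhdAvoiding G c v (insert ζ C) ∪ colorNbhd G c v ζ ⊆ nbhdAvoiding G c v C := by
    rintro u (⟨hu, hC⟩ | ⟨hu, rfl⟩)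
    · exact ⟨hu, fun h ↦ hC (mem_insert_of_mem h)⟩
    · exact ⟨hu, hζ⟩
  have hcard := Set.ncard_le_ncard hsub
  rw [Set.ncard_union_eq hdisj] at hcard
  have hdeg := colorDeg_le_ncard_nbhdAvoiding_add_card G c v (insert ζ C)
  rw [card_insert_of_notMem hζ] at hdeg
  omega

lemma colorDeg_add_ncard_colorNbhd_le_card_add_one (G : SimpleGraph V) (c : Sym2 V → ℕ) (v : V)
    (α : ℕ) : colorDeg G c v + (colorNbhd G c v α).ncard ≤ Nat.card V + 1 :=
  (colorDeg_add_ncard_colorNbhd_le (notMem_empty α)).trans (by simpa using Set.ncard_le_card _)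

lemma RainbowPathAvoiding.colorDeg_add_colorDeg_add_ncard_le
    (h : RainbowPathAvoiding G c z y k {ζ}) (hno : ¬ HasRainbowCycle G c (k + 1)) :
    colorDeg G c y + colorDeg G c z + (colorNbhd G c z ζ).ncard ≤
      (monoCommonNbhd G c z y).ncard + Nat.card V + 3 * k := by
  classical
  obtain ⟨p, hp, rfl, hrainbow, havoid⟩ := h
  set C := (p.edges.map c).toFinset with hC
  have hCcard : C.card ≤ p.length := by
    simpa using List.toFinset_card_le (p.edges.map c)
  have hsupport : {u | u ∈ p.support}.ncard ≤ p.length + 1 := by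
    simpa [← List.coe_toFinset, Set.ncard_coe_finset] using List.toFinset_card_le p.support
  have hζ : ζ ∉ C := by
    simpa [hC] using havoid
  have hy := colorDeg_le_ncard_nbhdAvoiding_add_card G c y C
  have hz := colorDeg_add_ncard_colorNbhd_le (G := G) (c := c) (v := z) hζ
  have hinter : (nbhdAvoiding G c y C ∩ nbhdAvoiding G c z C).ncard ≤ _ :=
    (Set.ncard_le_ncard (nbhdAvoiding_inter_subset hp hrainbow hno)).trans
      (Set.ncard_union_le _ _)
  have hunion := Set.ncard_le_card (nbhdAvoiding G c y C ∪ nbhdAvoiding G c z C)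
  have hincl_excl := Set.ncard_union_add_ncard_inter (nbhdAvoiding G c y C) (nbhdAvoiding G c z C)
  omega

lemma ncard_setOf_mem_monoCommonNbhd_lt_repNum {Y : Set V} (hz : z ∉ Y) (hu : G.Adj u z) :
    {y ∈ Y | u ∈ monoCommonNbhd G c z y}.ncard < repNum G c := by
  refine (Set.ncard_lt_ncard ⟨?_, fun h ↦ ?_⟩).trans_le
    (ncard_colorNbhd_le_repNum G c u (c s(u, z)))
  · rintro y ⟨-, -, huy, hc⟩
    exact ⟨huy.symm, by rw [hc, Sym2.eq_swap]⟩
  · exact hz (h ⟨hu.symm, by rw [Sym2.eq_swap]⟩).1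

lemma EdgeMinimal.ncard_mul_le_colorDeg_mul (hmin : EdgeMinimal G c) {Y : Set V} (hz : z ∉ Y)
    (hR : 1 ≤ repNum G c) {m : ℚ} (hm : ∀ y ∈ Y, m ≤ (monoCommonNbhd G c z y).ncard) :
    Y.ncard * m ≤ colorDeg G c z * ((repNum G c : ℚ) - 1) := by
  classical
  have := Fintype.ofFinite V
  have hcount : (#Y.toFinset) • m ≤ (#(bangNbhd G c z).toFinset) • ((repNum G c : ℚ) - 1) := by
    refine card_nsmul_le_card_nsmul (fun y u ↦ u ∈ monoCommonNbhd G c z y) (fun y hy ↦ ?_)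
      fun u hu ↦ ?_
    · rw [Set.mem_toFinset] at hy
      have hsub := hmin.monoCommonNbhd_subset_bangNbhd (ne_of_mem_of_not_mem hy hz).symm
      rw [← Set.ncard_coe_finset, coe_bipartiteAbove]
      simp only [Set.mem_toFinset]
      rw [Set.sep_mem_eq, Set.inter_eq_right.2 hsub]
      exact hm y hy
    · have hlt := ncard_setOf_mem_monoCommonNbhd_lt_repNum (c := c) hz (Set.mem_toFinset.1 hu).1
      rw [← Set.ncard_coe_finset, coe_bipartiteBelow, le_sub_iff_add_le]
      simp only [Set.mem_toFinset]
      exact_mod_cast hlt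
  rw [nsmul_eq_mul, nsmul_eq_mul, ← Set.ncard_eq_toFinset_card', ← Set.ncard_eq_toFinset_card']
    at hcount
  have hR' : (0 : ℚ) ≤ repNum G c - 1 := sub_nonneg.2 (by exact_mod_cast hR)
  refine hcount.trans (mul_le_mul_of_nonneg_right ?_ hR')
  exact_mod_cast ncard_bangNbhd_le_colorDeg G c z

end

lemma le_half_add_of_mul_le {𝕜 : Type*} [Field 𝕜] [LinearOrder 𝕜] [IsStrictOrderedRing 𝕜]
    {n d D k l r y : 𝕜} (hn : 0 ≤ n) (hl : 0 ≤ l) (hy : 0 < y) (hdD : d ≤ D)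
    (hnD : n ≤ 2 * D) (hDk : D + k ≤ n) (h : y * (d + D + k - n - 3 * l) ≤ D * r) :
    d ≤ n / 2 + (3 * l + r * n / (2 * y) - k) := by
  suffices hmul : y * (2 * d - n - 6 * l + 2 * k) ≤ r * n by
    have hdiv : (2 * d - n - 6 * l + 2 * k) / 2 ≤ r * n / (2 * y) := by
      rw [div_le_div_iff₀ two_pos (by positivity)]
      linarith
    linarith
  rcases le_total y r with hyr | hry
  · calc y * (2 * d - n - 6 * l + 2 * k) ≤ y * n := by gcongr; linarith
      _ ≤ r * n := by gcongr
  · calc y * (2 * d - n - 6 * l + 2 * k)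
        = 2 * (y * (d + D + k - n - 3 * l)) - y * (2 * D - n) := by ring
      _ ≤ 2 * (D * r) - r * (2 * D - n) := by gcongr
      _ = r * n := by ring

theorem stmt6_general [Finite V] {ℓ : ℕ} (hl : 3 ≤ ℓ) {G : SimpleGraph V} {c : Sym2 V → ℕ}
    (hmin : EdgeMinimal G c) (hno : ¬ HasRainbowCycle G c ℓ) (z : V) (ζ : ℕ) {Y : Set V}
    (hpath : ∀ y ∈ Y, RainbowPathAvoiding G c z y (ℓ - 1) {ζ}) (hY : Y.Nonempty) :
    (minColorDeg G c : ℚ) ≤ (Nat.card V : ℚ) / 2 +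
      max 0 (3 * ℓ + ((repNum G c : ℚ) - 1) * ((Nat.card V : ℚ) + 1) / (2 * Y.ncard) -
        ((colorNbhd G c z ζ).ncard - 1)) := by
  rcases le_or_gt (2 * minColorDeg G c) (Nat.card V) with hsmall | hlarge
  · have hsmall' : (2 * minColorDeg G c : ℚ) ≤ Nat.card V := by exact_mod_cast hsmall
    exact le_add_of_le_of_nonneg (by linarith) (le_max_left _ _)
  have hdD := minColorDeg_le_colorDeg G c z
  have hR : 1 ≤ repNum G c := one_le_repNum_of_colorDeg_pos (v := z) (by omega)
  have hz : z ∉ Y := fun h ↦ (hpath z h).ne (by omega) rfl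
  have hm : ∀ y ∈ Y, (minColorDeg G c + colorDeg G c z + ((colorNbhd G c z ζ).ncard - 1) -
      Nat.card V - 3 * ℓ : ℚ) ≤ (monoCommonNbhd G c z y).ncard := fun y hy ↦ by
    have hlocal := (hpath y hy).colorDeg_add_colorDeg_add_ncard_le
      (by rwa [Nat.sub_add_cancel (by omega)])
    have hdy := minColorDeg_le_colorDeg G c y
    have hle : minColorDeg G c + colorDeg G c z + (colorNbhd G c z ζ).ncard ≤
        (monoCommonNbhd G c z y).ncard + Nat.card V + 3 * ℓ := by omega
    qify at hle
    linarith
  have hDk := colorDeg_add_ncard_colorNbhd_le_card_add_one G c z ζ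
  have hcount := hmin.ncard_mul_le_colorDeg_mul hz hR hm
  have hYpos : 0 < Y.ncard := (Set.ncard_pos (Set.toFinite Y)).2 hY
  qify at hdD hlarge hDk hYpos hR
  have hbound := le_half_add_of_mul_le (k := ((colorNbhd G c z ζ).ncard : ℚ) - 1)
    (Nat.cast_nonneg _) (Nat.cast_nonneg ℓ) hYpos hdD (by linarith) (by linarith) hcount
  refine hbound.trans ?_
  gcongr
  refine le_max_of_le_right ?_
  have := sub_nonneg.2 hR
  gcongr
  linarith

theorem stmt6 (ℓ : ℕ) (hl : 3 ≤ ℓ) [Fintype V] (G : SimpleGraph V) (c : Sym2 V → ℕ)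
    (hmin : EdgeMinimal G c) (hno : ¬ HasRainbowCycle G c ℓ)
    (z : V) (ζ : ℕ)
    (hmaxpair : Set.ncard {u : V | G.Adj u z ∧ c s(u, z) = ζ} = repNum G c)
    (Y : Set V) (hYdef : Y = {y : V | RainbowPathAvoiding G c z y (ℓ - 1) {ζ}})
    (hY : Y.Nonempty) :
    (minColorDeg G c : ℚ) ≤ (Fintype.card V : ℚ) / 2 +
      max 0 (3 * ℓ + ((repNum G c : ℚ) - 1) *
        (((Fintype.card V : ℚ) + 1) / (2 * Y.ncard) - 1)) := by
  have h := stmt6_general hl hmin hno z ζ (fun y hy ↦ by rwa [hYdef] at hy) hY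
  rw [colorNbhd, hmaxpair, Nat.card_eq_fintype_card] at h
  convert h using 3
  ring
end

section
/- For every integer ℓ ≥ 3, every edge-colored graph (G,c) on n > 432ℓ vertices with δ^c(G) ≥ (n+1)/2 contains a rainbow ℓ-cycle. -/
open Finset

variable {V : Type*}

/-!
Choose at every vertex `v` a set `N v` of `d > n / 2` neighbors joined to `v` by edges of distinct
colors.

For `ℓ = 3`, take a minimal vertex set `S` whose vertices see on average at least `(#S + 1) / 2`
colors inside `S`. Removing a vertex must destroy this, so each vertex is the only one of its color
for many of its neighbors, and at a vertex where the edges to these private neighbors have the most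
colors two of them span a rainbow triangle.

For `ℓ ≥ 4`, take a vertex `v` and a color `α` with the largest number `R` of edges of color `α` at
`v`, and consider the ends `y` of rainbow paths of length `ℓ - 2` from `v` that avoid `α`. If there
is no rainbow `ℓ`-cycle, then `y` can be joined to a vertex `x` of `N v` essentially only when `xy`
and `xv` have the same color, which happens for at most `d * R` pairs `(x, y)`. Hence, on average,
`y` is joined to almost every vertex outside `N v` and the `α`-neighbors of `v`. For `ℓ = 4`,
counting the pairs in which the two colors differ gives `d ≤ 4 * R + 14`, which is incompatible with
this. For `ℓ ≥ 5`, compare the ends of the paths of lengths `ℓ - 4`, `ℓ - 3` and `ℓ - 2`: almost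
all edges between consecutive layers are present, so one finds either a nearly complete vertex set
or a nearly complete bipartite pair of vertex sets. There, rainbow paths can be prolonged greedily
and closed up at the required length; in the bipartite case an odd cycle starts from a path of
length `3` with both ends on the same side, through a vertex joined to both sides.
-/

section Counting

variable {α β : Type*}

theorem mul_card_filter_lt_le_sum (s : Finset α) (f : α → ℕ) (t : ℕ) :
    t * #{a ∈ s | t < f a} ≤ ∑ a ∈ s, f a :=
  calc
    t * #{a ∈ s | t < f a} ≤ ∑ a ∈ s with t < f a, f a := by
      rw [mul_comm, ← smul_eq_mul]
      exact card_nsmul_le_sum _ _ _ fun a ha => (mem_filter.1 ha).2.le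
    _ ≤ ∑ a ∈ s, f a := sum_le_sum_of_subset (filter_subset _ _)

theorem sum_card_sdiff_eq_sum_card_filter_notMem [DecidableEq β] (s : Finset α) (t : Finset β)
    (N : α → Finset β) : ∑ a ∈ s, #(t \ N a) = ∑ b ∈ t, #{a ∈ s | b ∉ N a} := by
  simpa only [bipartiteAbove, bipartiteBelow, filter_notMem_eq_sdiff] using
    sum_card_bipartiteAbove_eq_sum_card_bipartiteBelow (fun a b => b ∉ N a) (s := s) (t := t)

theorem mul_card_filter_lt_card_filter_notMem_le [DecidableEq β] {s : Finset α} {t : Finset β}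
    {N : α → Finset β} {m : ℕ} (hm : ∀ a ∈ s, #(t \ N a) ≤ m) (k : ℕ) :
    k * #{b ∈ t | k < #{a ∈ s | b ∉ N a}} ≤ #s * m :=
  calc
    k * #{b ∈ t | k < #{a ∈ s | b ∉ N a}} ≤ ∑ b ∈ t, #{a ∈ s | b ∉ N a} :=
      mul_card_filter_lt_le_sum t _ k
    _ = ∑ a ∈ s, #(t \ N a) := (sum_card_sdiff_eq_sum_card_filter_notMem s t N).symm
    _ ≤ #s * m := sum_le_card_nsmul _ _ _ hm

end Counting

section RainbowPaths

variable {K : Type*} {G : SimpleGraph V} {c : Sym2 V → K} {u v w : V}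

/-- `HasRainbowCycle` for an arbitrary type of colors: `G` has a cycle of length `ℓ` whose edges
receive distinct colors. -/
def ContainsRainbowCycle (G : SimpleGraph V) (c : Sym2 V → K) (ℓ : ℕ) : Prop :=
  ∃ (u : V) (p : G.Walk u u), p.IsCycle ∧ p.length = ℓ ∧ (p.edges.map c).Nodup

/-- A rainbow path: a walk without repeated vertices whose edges receive distinct colors. -/
def IsRainbowPath (c : Sym2 V → K) (p : G.Walk u v) : Prop :=
  p.IsPath ∧ (p.edges.map c).Nodup

theorem isRainbowPath_nil (c : Sym2 V → K) (u : V) : IsRainbowPath c (.nil : G.Walk u u) :=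
  ⟨.nil, by simp⟩

namespace IsRainbowPath

variable {p : G.Walk u v}

theorem cons (hp : IsRainbowPath c p) (h : G.Adj w u) (hw : w ∉ p.support)
    (hc : c s(u, w) ∉ p.edges.map c) : IsRainbowPath c (.cons h p) := by
  refine ⟨hp.1.cons hw, ?_⟩
  rw [SimpleGraph.Walk.edges_cons, List.map_cons, List.nodup_cons, Sym2.eq_swap]
  exact ⟨hc, hp.2⟩

theorem reverse (hp : IsRainbowPath c p) : IsRainbowPath c p.reverse := by
  refine ⟨hp.1.reverse, ?_⟩
  rw [SimpleGraph.Walk.edges_reverse, List.map_reverse, List.nodup_reverse]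
  exact hp.2

theorem ne_of_length_pos (hp : IsRainbowPath c p) (h : 0 < p.length) : u ≠ v := by
  intro huv
  have hnil := hp.1.nil_iff_eq.2 huv
  rw [← SimpleGraph.Walk.length_eq_zero_iff] at hnil
  omega

theorem containsRainbowCycle (hp : IsRainbowPath c p) (huw : G.Adj u w)
    (hvw : G.Adj v w) (hw : w ∉ p.support) (hcu : c s(u, w) ∉ p.edges.map c)
    (hcv : c s(v, w) ∉ p.edges.map c) (huv : c s(u, w) ≠ c s(v, w)) :
    ContainsRainbowCycle G c (p.length + 2) := by
  have hq := hp.cons huw.symm hw hcu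
  refine ⟨v, .cons hvw (.cons huw.symm p), ?_, by simp, ?_⟩
  · rw [SimpleGraph.Walk.cons_isCycle_iff, SimpleGraph.Walk.edges_cons, List.mem_cons]
    refine ⟨hq.1, not_or.2 ⟨fun h => huv ?_, fun h => hw (p.snd_mem_support_of_mem_edges h)⟩⟩
    rw [h, Sym2.eq_swap]
  · rw [SimpleGraph.Walk.edges_cons, List.map_cons, List.nodup_cons]
    refine ⟨?_, hq.2⟩
    rw [SimpleGraph.Walk.edges_cons, List.map_cons, List.mem_cons, Sym2.eq_swap (a := w)]
    exact not_or.2 ⟨huv.symm, hcv⟩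

end IsRainbowPath

theorem card_toFinset_support_le [DecidableEq V] (p : G.Walk u v) :
    #p.support.toFinset ≤ p.length + 1 :=
  p.length_support ▸ List.toFinset_card_le p.support

theorem card_toFinset_colors_le [DecidableEq K] (c : Sym2 V → K) (p : G.Walk u v) :
    #(p.edges.map c).toFinset ≤ p.length := by
  simpa using List.toFinset_card_le (p.edges.map c)

end RainbowPaths

/-- `N` selects, at every vertex, `d` neighbors joined to it by edges of distinct colors. The
selection need not be symmetric, so `N` is best thought of as a digraph. -/
structure IsRainbowSelection {K : Type*} (G : SimpleGraph V) (c : Sym2 V → K) (d : ℕ)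
    (N : V → Finset V) : Prop where
  card_eq (u : V) : #(N u) = d
  adj {u w : V} : w ∈ N u → G.Adj u w
  injOn (u : V) : Set.InjOn (fun w => c s(u, w)) (N u)

section Selections

variable {K : Type*} {G : SimpleGraph V} {c : Sym2 V → K} {d : ℕ} {N : V → Finset V}

theorem exists_isRainbowSelection [Finite V]
    (hd : ∀ v, d ≤ ((fun u => c s(v, u)) '' G.neighborSet v).ncard) :
    ∃ N, IsRainbowSelection G c d N := by
  have hselect (v : V) : ∃ S : Finset V, #S = d ∧ (S : Set V) ⊆ G.neighborSet v ∧
      Set.InjOn (fun u => c s(v, u)) S := by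
    obtain ⟨T, hT, hbij⟩ := Set.exists_subset_bijOn (G.neighborSet v) (fun u => c s(v, u))
    have hcard : d ≤ #T.toFinite.toFinset := by
      rw [← Set.ncard_eq_toFinset_card, ← hbij.injOn.ncard_image, hbij.image_eq]
      exact hd v
    obtain ⟨S, hST, hS⟩ := exists_subset_card_eq hcard
    have hST' : (S : Set V) ⊆ T := fun x hx => T.toFinite.mem_toFinset.1 (hST hx)
    exact ⟨S, hS, hST'.trans hT, hbij.injOn.mono hST'⟩
  choose N hcard hadj hinj using hselect
  exact ⟨N, hcard, fun hw => hadj _ hw, hinj⟩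

namespace IsRainbowSelection

theorem card_filter_color_mem_le [DecidableEq K] (h : IsRainbowSelection G c d N) (u : V)
    (F : Finset K) : #{w ∈ N u | c s(u, w) ∈ F} ≤ #F :=
  card_le_card_of_injOn (fun w => c s(u, w)) (fun _ hw => (mem_filter.1 hw).2)
    ((h.injOn u).mono (filter_subset _ _))

theorem exists_mem_notMem_color_notMem (h : IsRainbowSelection G c d N) {u : V} {S W : Finset V}
    {F : Finset K} (hS : S ⊆ N u) (hcard : #W + #F < #S) :
    ∃ x ∈ S, x ∉ W ∧ c s(u, x) ∉ F := by
  classical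
  have hlt : #(W ∪ {w ∈ N u | c s(u, w) ∈ F}) < #S :=
    ((card_union_le _ _).trans (Nat.add_le_add_left (h.card_filter_color_mem_le u F) _)).trans_lt
      hcard
  obtain ⟨x, hxS, hx⟩ := exists_mem_notMem_of_card_lt_card hlt
  rw [mem_union, mem_filter, not_or] at hx
  exact ⟨x, hxS, hx.1, fun hF => hx.2 ⟨hS hxS, hF⟩⟩

theorem exists_isRainbowPath_cons [DecidableEq V] (h : IsRainbowSelection G c d N) {u v : V}
    {p : G.Walk u v} (hp : IsRainbowPath c p) {T : Finset V}
    (hT : 2 * p.length + 1 < #(N u ∩ T)) :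
    ∃ x ∈ T, ∃ q : G.Walk x v, IsRainbowPath c q ∧ q.length = p.length + 1 := by
  classical
  have hsupp := card_toFinset_support_le p
  have hcol := card_toFinset_colors_le c p
  obtain ⟨x, hx, hxp, hxc⟩ := h.exists_mem_notMem_color_notMem (S := N u ∩ T)
    (W := p.support.toFinset) (F := (p.edges.map c).toFinset) inter_subset_left (by omega)
  rw [List.mem_toFinset] at hxp hxc
  rw [mem_inter] at hx
  exact ⟨x, hx.2, .cons (h.adj hx.1).symm p, hp.cons _ hxp hxc, by simp⟩

theorem exists_isRainbowPath_length_three [DecidableEq V] (h : IsRainbowSelection G c d N)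
    {y z : V} (hyz : G.Adj y z) {T : Finset V} (hy : 3 < #(N y ∩ T)) (hz : 5 < #(N z ∩ T)) :
    ∃ s ∈ T, ∃ t ∈ T, ∃ p : G.Walk t s, IsRainbowPath c p ∧ p.length = 3 := by
  have hedge := (isRainbowPath_nil c z).cons hyz (by simpa using hyz.ne) (by simp)
  obtain ⟨s, hs, p, hp, hlen⟩ := h.exists_isRainbowPath_cons hedge (by simpa using hy)
  obtain ⟨t, ht, q, hq, hlen'⟩ := h.exists_isRainbowPath_cons hp.reverse (T := T)
    (by simpa [hlen] using hz)
  exact ⟨s, hs, t, ht, q, hq, by simp [hlen', hlen]⟩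

end IsRainbowSelection

end Selections

section AlternatingPairs

variable [DecidableEq V] {N : V → Finset V} {ℓ : ℕ}

/-- The vertices joined to both `s` and `e` in both directions, when `N` is read as a digraph. -/
def mutualNbrs (N : V → Finset V) (s e : V) : Finset V :=
  {x ∈ N s ∩ N e | s ∈ N x ∧ e ∈ N x}

theorem card_le_card_mutualNbrs_add (N : V → Finset V) (X : Finset V) (s e : V) :
    #X ≤ #(mutualNbrs N s e) + (#(X \ N s) + #{x ∈ X | s ∉ N x}) +
      (#(X \ N e) + #{x ∈ X | e ∉ N x}) := by
  have hX : X ⊆ mutualNbrs N s e ∪ ((X \ N s) ∪ {x ∈ X | s ∉ N x}) ∪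
      ((X \ N e) ∪ {x ∈ X | e ∉ N x}) := by
    intro x hx
    simp only [mutualNbrs, mem_union, mem_filter, mem_inter, mem_sdiff]
    tauto
  calc
    #X ≤ _ := card_le_card hX
    _ ≤ _ := (card_union_le _ _).trans (add_le_add (card_union_le _ _) (card_union_le _ _))
    _ ≤ _ := by gcongr; exact card_union_le _ _

/-- A pair of vertex sets in which a rainbow path ending in `P` can be prolonged by stepping
alternately into `Q` and into `P`, until it is closed up to a cycle of length `ℓ` through a common
neighbor of two vertices of `P`. The sets may overlap, and even coincide. -/
structure IsAlternatingPair (N : V → Finset V) (ℓ : ℕ) (P Q : Finset V) : Prop where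
  left {p : V} : p ∈ P → 2 * ℓ < #(N p ∩ Q)
  right {q : V} : q ∈ Q → 2 * ℓ < #(N q ∩ P)
  common {s e : V} : s ∈ P → e ∈ P → 3 * ℓ < #(mutualNbrs N s e)

namespace IsAlternatingPair

theorem of_card_sdiff_add_le {P Q X : Finset V} {w : ℕ} (hP : ∀ p ∈ P, 2 * ℓ < #(N p ∩ Q))
    (hQ : ∀ q ∈ Q, 2 * ℓ < #(N q ∩ P))
    (hw : ∀ p ∈ P, #(X \ N p) + #{x ∈ X | p ∉ N x} ≤ w) (hX : 2 * w + 3 * ℓ < #X) :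
    IsAlternatingPair N ℓ P Q where
  left := hP _
  right := hQ _
  common {s e} hs he := by
    have hcard := card_le_card_mutualNbrs_add N X s e
    have := hw s hs
    have := hw e he
    omega

variable {K : Type*} {G : SimpleGraph V} {c : Sym2 V → K} {d : ℕ} {P Q : Finset V}

theorem containsRainbowCycle_of_ends (hPQ : IsAlternatingPair N ℓ P Q)
    (h : IsRainbowSelection G c d N) {e s : V} {p : G.Walk e s} (hp : IsRainbowPath c p)
    (he : e ∈ P) (hs : s ∈ P) (hlen : 0 < p.length) (hℓ : p.length + 2 = ℓ) :
    ContainsRainbowCycle G c ℓ := by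
  classical
  have hsupp := card_toFinset_support_le p
  have hcol := card_toFinset_colors_le c p
  have hcommon := hPQ.common hs he
  set F := (p.edges.map c).toFinset
  set W := p.support.toFinset ∪ {w ∈ N e | c s(e, w) ∈ F}
  have hW : #W ≤ (p.length + 1) + p.length :=
    (card_union_le _ _).trans (add_le_add hsupp ((h.card_filter_color_mem_le e F).trans hcol))
  obtain ⟨x, hx, hxW, hxF⟩ := h.exists_mem_notMem_color_notMem (u := s) (S := mutualNbrs N s e)
    (W := W) (F := F) ((filter_subset _ _).trans inter_subset_left) (by omega)
  simp only [mutualNbrs, mem_filter, mem_inter] at hx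
  simp only [W, F, mem_union, mem_filter, List.mem_toFinset, not_or, not_and] at hxW hxF
  subst hℓ
  refine hp.containsRainbowCycle (h.adj hx.1.2) (h.adj hx.1.1) hxW.1 (hxW.2 hx.1.2) hxF ?_
  rw [Sym2.eq_swap, Sym2.eq_swap (a := s)]
  exact (h.injOn x).ne hx.2.2 hx.2.1 (hp.ne_of_length_pos hlen)

theorem containsRainbowCycle_of_left (hPQ : IsAlternatingPair N ℓ P Q)
    (h : IsRainbowSelection G c d N) (hl : 3 ≤ ℓ) {s : V} (hs : s ∈ P) (k : ℕ) :
    ∀ {e : V} {p : G.Walk e s}, IsRainbowPath c p → e ∈ P → p.length + 2 * k + 2 = ℓ →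
      ContainsRainbowCycle G c ℓ := by
  induction k with
  | zero => exact fun hp he hlen => hPQ.containsRainbowCycle_of_ends h hp he hs (by omega) hlen
  | succ k ih =>
    intro e p hp he hlen
    have := hPQ.left he
    obtain ⟨x, hx, q, hq, hqlen⟩ := h.exists_isRainbowPath_cons hp (T := Q) (by omega)
    have := hPQ.right hx
    obtain ⟨y, hy, r, hr, hrlen⟩ := h.exists_isRainbowPath_cons hq (T := P) (by omega)
    exact ih hr hy (by omega)

theorem containsRainbowCycle_of_even (hPQ : IsAlternatingPair N ℓ P Q)
    (h : IsRainbowSelection G c d N) (hP : P.Nonempty) (hl : 3 ≤ ℓ) (hℓ : Even ℓ) :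
    ContainsRainbowCycle G c ℓ := by
  obtain ⟨a, ha⟩ := hP
  obtain ⟨k, rfl⟩ := hℓ
  exact hPQ.containsRainbowCycle_of_left h hl ha (k - 1) (isRainbowPath_nil c a) ha
    (by rw [SimpleGraph.Walk.length_nil]; omega)

theorem containsRainbowCycle_of_odd (hPQ : IsAlternatingPair N ℓ P Q)
    (h : IsRainbowSelection G c d N) (hl : 5 ≤ ℓ) (hℓ : Odd ℓ) {y z : V} (hy : y ∈ Q)
    (hyz : G.Adj y z) (hz : 2 * ℓ < #(N z ∩ P)) : ContainsRainbowCycle G c ℓ := by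
  have := hPQ.right hy
  obtain ⟨s, hs, t, ht, p, hp, hlen⟩ :=
    h.exists_isRainbowPath_length_three hyz (T := P) (by omega) (by omega)
  obtain ⟨k, rfl⟩ := hℓ
  exact hPQ.containsRainbowCycle_of_left h (by omega) hs (k - 2) hp ht (by omega)

theorem containsRainbowCycle_of_self (hP : IsAlternatingPair N ℓ P P)
    (h : IsRainbowSelection G c d N) (hne : P.Nonempty) (hl : 3 ≤ ℓ) :
    ContainsRainbowCycle G c ℓ := by
  rcases Nat.even_or_odd ℓ with heven | hodd
  · exact hP.containsRainbowCycle_of_even h hne hl heven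
  · obtain ⟨a, ha⟩ := hne
    have := hP.left ha
    obtain ⟨x, hx, p, hp, hlen⟩ :=
      h.exists_isRainbowPath_cons (isRainbowPath_nil c a) (T := P)
        (by rw [SimpleGraph.Walk.length_nil]; omega)
    rw [SimpleGraph.Walk.length_nil] at hlen
    obtain ⟨k, rfl⟩ := hodd
    exact hP.containsRainbowCycle_of_left h hl ha (k - 1) hp hx (by omega)

end IsAlternatingPair

end AlternatingPairs

namespace IsRainbowSelection

variable [DecidableEq V] {K : Type*} {G : SimpleGraph V} {c : Sym2 V → K} {d : ℕ}
  {N : V → Finset V} {ℓ : ℕ}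

theorem containsRainbowCycle_of_sum_card_sdiff_le (h : IsRainbowSelection G c d N) (hl : 3 ≤ ℓ)
    {Q : Finset V} {M w : ℕ} (hM : ∑ q ∈ Q, #(Q \ N q) ≤ M) (hQ : 2 * w + 3 * ℓ < #Q)
    (hw : 2 * M + w * (w + 2 * ℓ) < w * #Q) : ContainsRainbowCycle G c ℓ := by
  set missing : V → ℕ := fun q => #(Q \ N q) + #{x ∈ Q | q ∉ N x} with hmissing
  set P := {q ∈ Q | ¬w < missing q}
  have hmissingP : ∀ q ∈ P, missing q ≤ w := fun q hq => not_lt.1 (mem_filter.1 hq).2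
  have hsum : ∑ q ∈ Q, missing q ≤ 2 * M := by
    rw [hmissing, sum_add_distrib, ← sum_card_sdiff_eq_sum_card_filter_notMem]
    omega
  have hPcard : w + 2 * ℓ < #P := by
    have hsplit : w * #{q ∈ Q | w < missing q} + w * #P = w * #Q := by
      rw [← mul_add, card_filter_add_card_filter_not]
    have hmarkov := mul_card_filter_lt_le_sum Q missing w
    refine Nat.lt_of_mul_lt_mul_left (a := w) ?_
    omega
  have hPP : ∀ p ∈ P, 2 * ℓ < #(N p ∩ P) := by
    intro p hp
    have hsdiff : #(P \ N p) ≤ #(Q \ N p) := by gcongr; exact filter_subset _ _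
    have hp' : #(Q \ N p) + #{x ∈ Q | p ∉ N x} ≤ w := hmissingP p hp
    have hsplit := card_inter_add_card_sdiff P (N p)
    rw [inter_comm] at hsplit
    omega
  have hpair : IsAlternatingPair N ℓ P P := .of_card_sdiff_add_le hPP hPP hmissingP hQ
  exact hpair.containsRainbowCycle_of_self h (card_pos.1 (by omega)) hl

theorem add_card_le_card_inter_add_card [Fintype V] (h : IsRainbowSelection G c d N) (z : V)
    (S : Finset V) : d + #S ≤ #(N z ∩ S) + Fintype.card V := by
  rw [← h.card_eq z, ← card_inter_add_card_union]
  gcongr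
  exact card_le_univ _

theorem containsRainbowCycle_of_isAlternatingPair [Fintype V] (h : IsRainbowSelection G c d N)
    (hl : 4 ≤ ℓ) (hn : Fintype.card V < 2 * d) {A A' B B' : Finset V} (hA' : A' ⊆ A)
    (hB' : B' ⊆ B) (hAB : Disjoint A B) (hA : IsAlternatingPair N ℓ A' B)
    (hB : IsAlternatingPair N ℓ B' A) (hA'ne : A'.Nonempty) (hB'ne : B'.Nonempty)
    (hcard : Fintype.card V + 4 * ℓ < d + #A' + #B') : ContainsRainbowCycle G c ℓ := by
  rcases Nat.even_or_odd ℓ with heven | hodd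
  · exact hA.containsRainbowCycle_of_even h hA'ne (by omega) heven
  have hl5 : 5 ≤ ℓ := by
    obtain ⟨k, rfl⟩ := hodd
    omega
  obtain ⟨a, ha⟩ := hA'ne
  obtain ⟨b, hb⟩ := hB'ne
  obtain ⟨z, hzab⟩ := inter_nonempty_of_card_lt_card_add_card (subset_univ (N a))
    (subset_univ (N b)) (by rw [card_univ, h.card_eq, h.card_eq]; omega)
  obtain ⟨hza, hzb⟩ := mem_inter.1 hzab
  have hz : 4 * ℓ < #(N z ∩ A') + #(N z ∩ B') := by
    have hunion := card_union_of_disjoint (hAB.mono hA' hB')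
    have hsees := h.add_card_le_card_inter_add_card z (A' ∪ B')
    have hsplit := card_union_le (N z ∩ A') (N z ∩ B')
    rw [← inter_union_distrib_left] at hsplit
    omega
  rcases Nat.lt_or_ge (2 * ℓ) #(N z ∩ A') with hzA | hzA
  · exact hA.containsRainbowCycle_of_odd h hl5 hodd (hB' hb) (h.adj hzb) hzA
  · exact hB.containsRainbowCycle_of_odd h hl5 hodd (hA' ha) (h.adj hza) (by omega)

end IsRainbowSelection

section NearlyBipartite

variable [DecidableEq V]

/-- The vertices of `A` that are selected by all but at most `t` vertices of `B`. -/
def wellSelected (N : V → Finset V) (A B : Finset V) (t : ℕ) : Finset V :=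
  {a ∈ A | ¬t < #{b ∈ B | a ∉ N b}}

variable {N : V → Finset V} {A B : Finset V}

theorem wellSelected_subset (N : V → Finset V) (A B : Finset V) (t : ℕ) :
    wellSelected N A B t ⊆ A :=
  filter_subset _ _

theorem mul_card_le_mul_card_wellSelected_add {m : ℕ} (hm : ∀ b ∈ B, #(A \ N b) ≤ m) (t : ℕ) :
    t * #A ≤ t * #(wellSelected N A B t) + #B * m := by
  have hsplit : #{a ∈ A | t < #{b ∈ B | a ∉ N b}} + #(wellSelected N A B t) = #A :=
    card_filter_add_card_filter_not _
  have hbad := mul_card_filter_lt_card_filter_notMem_le hm t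
  rw [← hsplit, mul_add]
  omega

theorem isAlternatingPair_wellSelected {ℓ m m' t : ℕ} (hA : ∀ a ∈ A, #(B \ N a) ≤ m)
    (hB : ∀ b ∈ B, #(A \ N b) ≤ m') (hBcard : 2 * (m + t) + 3 * ℓ < #B)
    (hAcard : m' + 2 * ℓ < #(wellSelected N A B t)) :
    IsAlternatingPair N ℓ (wellSelected N A B t) B := by
  have hsub := wellSelected_subset N A B t
  refine .of_card_sdiff_add_le (fun p hp => ?_) (fun q hq => ?_) (fun p hp => ?_) hBcard
  · have hp := hA p (hsub hp)
    have hsplit := card_inter_add_card_sdiff B (N p)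
    rw [inter_comm] at hsplit
    omega
  · have hq := hB q hq
    have hsdiff : #(wellSelected N A B t \ N q) ≤ #(A \ N q) := by gcongr
    have hsplit := card_inter_add_card_sdiff (wellSelected N A B t) (N q)
    rw [inter_comm] at hsplit
    omega
  · exact add_le_add (hA p (hsub hp)) (not_lt.1 (mem_filter.1 hp).2)

theorem IsRainbowSelection.containsRainbowCycle_of_nearly_bipartite [Fintype V] {K : Type*}
    {G : SimpleGraph V} {c : Sym2 V → K} {d ℓ m : ℕ} (h : IsRainbowSelection G c d N)
    (hl : 4 ≤ ℓ) (hd : 216 * ℓ < d) (hn : Fintype.card V < 2 * d) (hAB : Disjoint A B)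
    (hm : m ≤ 32 * ℓ) (hdA : d ≤ #A + 106 * ℓ) (hdmA : d + 2 * m ≤ #A + 130 * ℓ)
    (hAd : #A ≤ d + 2 * ℓ) (hdB : d ≤ #B + 2 * ℓ) (hBd : #B ≤ d + 2 * ℓ)
    (hA : ∀ a ∈ A, #(B \ N a) ≤ 4 * ℓ) (hB : ∀ b ∈ B, #(A \ N b) ≤ m) :
    ContainsRainbowCycle G c ℓ := by
  set A' := wellSelected N A B (100 * ℓ)
  set B' := wellSelected N B A (40 * ℓ)
  have hA' : 100 * #A ≤ 100 * #A' + 32 * (d + 2 * ℓ) := by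
    refine Nat.le_of_mul_le_mul_left ?_ (by omega : 0 < ℓ)
    calc
      ℓ * (100 * #A) = 100 * ℓ * #A := by ring
      _ ≤ 100 * ℓ * #A' + #B * m := mul_card_le_mul_card_wellSelected_add hB _
      _ ≤ 100 * ℓ * #A' + (d + 2 * ℓ) * (32 * ℓ) := by gcongr
      _ = ℓ * (100 * #A' + 32 * (d + 2 * ℓ)) := by ring
  have hB' : 40 * #B ≤ 40 * #B' + 4 * (d + 2 * ℓ) := by
    refine Nat.le_of_mul_le_mul_left ?_ (by omega : 0 < ℓ)
    calc
      ℓ * (40 * #B) = 40 * ℓ * #B := by ring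
      _ ≤ 40 * ℓ * #B' + #A * (4 * ℓ) := mul_card_le_mul_card_wellSelected_add hA _
      _ ≤ 40 * ℓ * #B' + (d + 2 * ℓ) * (4 * ℓ) := by gcongr
      _ = ℓ * (40 * #B' + 4 * (d + 2 * ℓ)) := by ring
  have hA'large : m + 2 * ℓ < #A' := by omega
  have hB'large : 4 * ℓ + 2 * ℓ < #B' := by omega
  have hlarge : Fintype.card V + 4 * ℓ < d + #A' + #B' := by omega
  exact h.containsRainbowCycle_of_isAlternatingPair hl hn (wellSelected_subset N A B _)
    (wellSelected_subset N B A _) hAB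
    (isAlternatingPair_wellSelected hA hB (by omega) hA'large)
    (isAlternatingPair_wellSelected hB hA (by omega) hB'large)
    (card_pos.1 (Nat.zero_lt_of_lt hA'large)) (card_pos.1 (Nat.zero_lt_of_lt hB'large)) hlarge

end NearlyBipartite

section Triangles

variable {K : Type*} [DecidableEq K] {G : SimpleGraph V} [DecidableRel G.Adj]
  {c : Sym2 V → K} {S : Finset V} {u v : V}

/-- The neighbors of `v` that lie in `S`. -/
def nbrsIn (G : SimpleGraph V) [DecidableRel G.Adj] (S : Finset V) (v : V) : Finset V :=
  {u ∈ S | G.Adj v u}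

/-- The colors of the edges from `v` into `S`. -/
def colorsIn (G : SimpleGraph V) [DecidableRel G.Adj] (c : Sym2 V → K) (S : Finset V) (v : V) :
    Finset K :=
  (nbrsIn G S v).image fun u => c s(v, u)

/-- A nonempty vertex set whose vertices see, on average, at least `(#S + 1) / 2` colors inside
it. -/
def IsColorDense (G : SimpleGraph V) [DecidableRel G.Adj] (c : Sym2 V → K) (S : Finset V) : Prop :=
  S.Nonempty ∧ #S * (#S + 1) ≤ 2 * ∑ u ∈ S, #(colorsIn G c S u)

theorem mem_nbrsIn : u ∈ nbrsIn G S v ↔ u ∈ S ∧ G.Adj v u :=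
  mem_filter

theorem card_nbrsIn_lt (hv : v ∈ S) : #(nbrsIn G S v) < #S :=
  card_lt_card <| (filter_ssubset).2 ⟨v, hv, G.loopless.irrefl v⟩

theorem IsRainbowSelection.isColorDense_univ [Fintype V] [Nonempty V] {d : ℕ} {N : V → Finset V}
    (h : IsRainbowSelection G c d N) (hn : Fintype.card V < 2 * d) : IsColorDense G c univ := by
  have hcolors : ∀ u ∈ univ, d ≤ #(colorsIn G c univ u) := by
    intro u _
    rw [← h.card_eq u, ← card_image_of_injOn (h.injOn u)]
    exact card_le_card <| image_subset_image fun x hx => mem_nbrsIn.2 ⟨mem_univ x, h.adj hx⟩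
  have hsum := card_nsmul_le_sum _ _ _ hcolors
  rw [smul_eq_mul, card_univ] at hsum
  refine ⟨univ_nonempty, ?_⟩
  rw [card_univ]
  calc
    Fintype.card V * (Fintype.card V + 1) ≤ Fintype.card V * (2 * d) := by gcongr; exact hn
    _ = 2 * (Fintype.card V * d) := by ring
    _ ≤ _ := by gcongr

variable [DecidableEq V]

/-- The neighbors `u` of `v` in `S` for which `uv` is the only edge from `u` into `S` of its color.
These are the vertices that see one color less when `v` is removed from `S`. -/
def privateNbrs (G : SimpleGraph V) [DecidableRel G.Adj] (c : Sym2 V → K) (S : Finset V) (v : V) :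
    Finset V :=
  {u ∈ nbrsIn G S v | ∀ w ∈ nbrsIn G S u, c s(u, w) = c s(u, v) → w = v}

/-- The colors of the edges from `v` to its private neighbors. -/
def privateColors (G : SimpleGraph V) [DecidableRel G.Adj] (c : Sym2 V → K) (S : Finset V)
    (v : V) : Finset K :=
  (privateNbrs G c S v).image fun u => c s(v, u)

theorem card_colorsIn_le_card_colorsIn_erase_add (hu : u ∈ S) :
    #(colorsIn G c S u) ≤
      #(colorsIn G c (S.erase v) u) + if u ∈ privateNbrs G c S v then 1 else 0 := by
  have hmem {x : V} (hx : x ∈ nbrsIn G S u) (hxv : x ≠ v) :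
      c s(u, x) ∈ colorsIn G c (S.erase v) u :=
    mem_image_of_mem _ <| mem_nbrsIn.2
      ⟨mem_erase.2 ⟨hxv, (mem_nbrsIn.1 hx).1⟩, (mem_nbrsIn.1 hx).2⟩
  split_ifs with hprivate
  · refine (card_le_card (t := insert (c s(u, v)) (colorsIn G c (S.erase v) u)) ?_).trans
      (card_insert_le _ _)
    refine image_subset_iff.2 fun x hx => mem_insert.2 ?_
    exact (eq_or_ne x v).imp (congrArg fun w => c s(u, w)) (hmem hx)
  · refine card_le_card (image_subset_iff.2 fun x hx => ?_)
    rcases eq_or_ne x v with rfl | hxv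
    · have hux := (mem_nbrsIn.1 hx).2
      obtain ⟨w, hw, hcw, hwx⟩ : ∃ w ∈ nbrsIn G S u, c s(u, w) = c s(u, x) ∧ w ≠ x := by
        by_contra! hunique
        exact hprivate (mem_filter.2 ⟨mem_nbrsIn.2 ⟨hu, hux.symm⟩, hunique⟩)
      exact hcw ▸ hmem hw hwx
    · exact hmem hx hxv

theorem sum_card_colorsIn_le (hv : v ∈ S) :
    ∑ u ∈ S, #(colorsIn G c S u) ≤ ∑ u ∈ S.erase v, #(colorsIn G c (S.erase v) u) +
      (#(colorsIn G c S v) + #(privateNbrs G c S v)) := by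
  have herase : ∑ u ∈ S.erase v, #(colorsIn G c S u) ≤
      ∑ u ∈ S.erase v, #(colorsIn G c (S.erase v) u) + #(privateNbrs G c S v) :=
    calc
      _ ≤ ∑ u ∈ S.erase v, (#(colorsIn G c (S.erase v) u) +
            if u ∈ privateNbrs G c S v then 1 else 0) :=
        sum_le_sum fun u hu => card_colorsIn_le_card_colorsIn_erase_add (mem_of_mem_erase hu)
      _ = _ + #{u ∈ S.erase v | u ∈ privateNbrs G c S v} := by
        rw [sum_add_distrib, card_filter]
      _ ≤ _ := by
        gcongr
        exact fun u hu => (mem_filter.1 hu).2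
  rw [← add_sum_erase S _ hv]
  omega

theorem card_colorsIn_add_card_privateNbrs_le :
    #(colorsIn G c S v) + #(privateNbrs G c S v) ≤ #(nbrsIn G S v) + #(privateColors G c S v) := by
  have hsub : privateNbrs G c S v ⊆ nbrsIn G S v := filter_subset _ _
  have hcolors : #(colorsIn G c S v) ≤
      #(privateColors G c S v) + #(nbrsIn G S v \ privateNbrs G c S v) :=
    calc
      #(colorsIn G c S v) = #(privateColors G c S v ∪
          (nbrsIn G S v \ privateNbrs G c S v).image fun u => c s(v, u)) := by
        rw [colorsIn, privateColors, ← image_union, union_sdiff_of_subset hsub]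
      _ ≤ _ := (card_union_le _ _).trans (Nat.add_le_add_left card_image_le _)
  have hsplit := card_sdiff_add_card_eq_card hsub
  omega

theorem card_lt_of_minimal_isColorDense (hS : Minimal (IsColorDense G c) S) (hv : v ∈ S) :
    #S < #(nbrsIn G S v) + #(privateColors G c S v) := by
  refine lt_of_lt_of_le ?_ card_colorsIn_add_card_privateNbrs_le
  have hdense := hS.prop.2
  have hsum := sum_card_colorsIn_le (G := G) (c := c) hv
  have hcard := card_erase_add_one hv
  rcases (S.erase v).eq_empty_or_nonempty with hempty | hne
  · have hnbrs : #(nbrsIn G S v) < 1 := by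
      simpa only [← hcard, hempty, card_empty] using card_nbrsIn_lt (G := G) hv
    have hcolors : #(colorsIn G c S v) ≤ #(nbrsIn G S v) := card_image_le
    have hprivate : #(privateNbrs G c S v) ≤ #(nbrsIn G S v) := card_filter_le _ _
    rw [hempty, sum_empty] at hsum
    nlinarith
  · have herase := hS.not_prop_of_lt (erase_ssubset hv)
    rw [IsColorDense, not_and, not_le] at herase
    specialize herase hne
    rw [← hcard] at hdense ⊢
    nlinarith

theorem exists_adj_of_minimal_isColorDense (hS : Minimal (IsColorDense G c) S) :
    ∃ v ∈ S, ∃ x ∈ privateNbrs G c S v, ∃ y ∈ privateNbrs G c S v,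
      G.Adj x y ∧ c s(v, x) ≠ c s(v, y) := by
  obtain ⟨v, hv, hmax⟩ := exists_max_image S (fun v => #(privateColors G c S v)) hS.prop.1
  have hvcard := card_lt_of_minimal_isColorDense hS hv
  have hvnbrs := card_nbrsIn_lt (G := G) hv
  obtain ⟨T, hT, hTinj, hTcolors⟩ := exists_subset_injOn_image_eq_of_surjOn
    (f := fun u => c s(v, u)) (privateNbrs G c S v : Set V) (privateColors G c S v)
    (by rw [privateColors, coe_image]; exact Set.surjOn_image _ _)
  have hTcard : #T = #(privateColors G c S v) := by rw [← hTcolors, card_image_of_injOn hTinj]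
  obtain ⟨x, hx⟩ : T.Nonempty := card_pos.1 (by omega)
  have hTS : T ⊆ S := fun y hy => (mem_nbrsIn.1 (mem_filter.1 (hT hy)).1).1
  have hinter : (nbrsIn G S x ∩ T).Nonempty := by
    refine inter_nonempty_of_card_lt_card_add_card (filter_subset _ _) hTS ?_
    have hxcard := card_lt_of_minimal_isColorDense hS (hTS hx)
    have hxmax := hmax x (hTS hx)
    omega
  obtain ⟨y, hy⟩ := hinter
  obtain ⟨hyS, hyT⟩ := mem_inter.1 hy
  have hxy := (mem_nbrsIn.1 hyS).2
  exact ⟨v, hv, x, hT hx, y, hT hyT, hxy, hTinj.ne hx hyT hxy.ne⟩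

theorem containsRainbowCycle_three_of_privateNbrs {x y : V} (hx : x ∈ privateNbrs G c S v)
    (hy : y ∈ privateNbrs G c S v) (hxy : G.Adj x y) (hc : c s(v, x) ≠ c s(v, y)) :
    ContainsRainbowCycle G c 3 := by
  simp only [privateNbrs, mem_filter, mem_nbrsIn] at hx hy
  obtain ⟨⟨hxS, hvx⟩, hxprivate⟩ := hx
  obtain ⟨⟨hyS, hvy⟩, hyprivate⟩ := hy
  have hcx : c s(x, y) ≠ c s(x, v) := fun h => hvy.ne (hxprivate y ⟨hyS, hxy⟩ h).symm
  have hcy : c s(y, x) ≠ c s(y, v) := fun h => hvx.ne (hyprivate x ⟨hxS, hxy.symm⟩ h).symm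
  have hedge := (isRainbowPath_nil c v).cons hvx.symm (by simpa using hvx.ne.symm) (by simp)
  refine hedge.containsRainbowCycle hxy hvy (w := y) ?_ ?_ ?_ ?_
  · simpa using ⟨hxy.ne.symm, hvy.ne.symm⟩
  · simpa using hcx
  · simpa [Sym2.eq_swap (a := x)] using hc.symm
  · rwa [Sym2.eq_swap, Sym2.eq_swap (a := v)]

end Triangles

theorem IsRainbowSelection.containsRainbowCycle_three [Fintype V] [Nonempty V] {K : Type*}
    {G : SimpleGraph V} {c : Sym2 V → K} {d : ℕ} {N : V → Finset V}
    (h : IsRainbowSelection G c d N) (hn : Fintype.card V < 2 * d) :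
    ContainsRainbowCycle G c 3 := by
  classical
  obtain ⟨S, -, hS⟩ := exists_minimal_le_of_wellFoundedLT (IsColorDense G c) _
    (h.isColorDense_univ hn)
  obtain ⟨v, -, x, hx, y, hy, hxy, hc⟩ := exists_adj_of_minimal_isColorDense hS
  exact containsRainbowCycle_three_of_privateNbrs hx hy hxy hc

section PathEnds

variable [Fintype V] {K : Type*} {G : SimpleGraph V} {c : Sym2 V → K} {d : ℕ} {N : V → Finset V}
  {v y : V} {α : K} {k : ℕ}

open scoped Classical in
/-- The vertices `y` at the end of a rainbow path of length `k` from `v` that avoids the color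
`α`. -/
noncomputable def pathEnds (G : SimpleGraph V) (c : Sym2 V → K) (v : V) (α : K) (k : ℕ) :
    Finset V :=
  {y | ∃ p : G.Walk y v, IsRainbowPath c p ∧ p.length = k ∧ α ∉ p.edges.map c}

theorem mem_pathEnds : y ∈ pathEnds G c v α k ↔
    ∃ p : G.Walk y v, IsRainbowPath c p ∧ p.length = k ∧ α ∉ p.edges.map c := by
  simp [pathEnds]

namespace IsRainbowSelection

theorem card_sdiff_filter_pathEnds_succ_le [DecidableEq V] [DecidableEq K]
    (h : IsRainbowSelection G c d N) {p : G.Walk y v} (hp : IsRainbowPath c p)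
    (hα : α ∉ p.edges.map c) :
    #(N y \ {x ∈ pathEnds G c v α (p.length + 1) | c s(y, x) ∉ p.edges.map c}) ≤
      2 * (p.length + 1) := by
  have hsupp := card_toFinset_support_le p
  have hcol := card_toFinset_colors_le c p
  have hinsert := card_insert_le α (p.edges.map c).toFinset
  by_contra! hlarge
  obtain ⟨x, hx, hxp, hxc⟩ := h.exists_mem_notMem_color_notMem (u := y)
    (W := p.support.toFinset) (F := insert α (p.edges.map c).toFinset) sdiff_subset
    (lt_of_le_of_lt (by omega) hlarge)
  rw [mem_insert, List.mem_toFinset, not_or] at hxc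
  rw [List.mem_toFinset] at hxp
  rw [mem_sdiff, mem_filter] at hx
  refine hx.2 ⟨mem_pathEnds.2 ⟨_, hp.cons (h.adj hx.1).symm hxp hxc.2, rfl, ?_⟩, hxc.2⟩
  rw [SimpleGraph.Walk.edges_cons, List.map_cons, List.mem_cons, Sym2.eq_swap, not_or]
  exact ⟨Ne.symm hxc.1, hα⟩

theorem card_sdiff_pathEnds_succ_le [DecidableEq V] (h : IsRainbowSelection G c d N)
    (hy : y ∈ pathEnds G c v α k) : #(N y \ pathEnds G c v α (k + 1)) ≤ 2 * (k + 1) := by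
  classical
  obtain ⟨p, hp, rfl, hα⟩ := mem_pathEnds.1 hy
  exact (card_le_card (sdiff_subset_sdiff subset_rfl (filter_subset _ _))).trans
    (h.card_sdiff_filter_pathEnds_succ_le hp hα)

theorem le_card_inter_pathEnds_succ_add [DecidableEq V] (h : IsRainbowSelection G c d N)
    (hy : y ∈ pathEnds G c v α k) :
    d ≤ #(N y ∩ pathEnds G c v α (k + 1)) + 2 * (k + 1) := by
  rw [← h.card_eq y, ← card_inter_add_card_sdiff (N y) (pathEnds G c v α (k + 1))]
  exact Nat.add_le_add_left (h.card_sdiff_pathEnds_succ_le hy) _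

theorem pathEnds_nonempty (h : IsRainbowSelection G c d N) (v : V) (α : K) (hk : 2 * k < d) :
    (pathEnds G c v α k).Nonempty := by
  classical
  induction k with
  | zero => exact ⟨v, mem_pathEnds.2 ⟨_, isRainbowPath_nil c v, rfl, by simp⟩⟩
  | succ k ih =>
    obtain ⟨y, hy⟩ := ih (by omega)
    have hcard := h.le_card_inter_pathEnds_succ_add hy
    exact (card_pos.1 (by omega)).mono (inter_subset_right (s₁ := N y))

theorem le_card_pathEnds_succ_add (h : IsRainbowSelection G c d N) (v : V) (α : K)
    (hk : 2 * k < d) : d ≤ #(pathEnds G c v α (k + 1)) + 2 * (k + 1) := by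
  classical
  obtain ⟨y, hy⟩ := h.pathEnds_nonempty v α hk
  refine (h.le_card_inter_pathEnds_succ_add hy).trans ?_
  gcongr
  exact inter_subset_right

end IsRainbowSelection

end PathEnds

section Separation

variable [Fintype V] {K : Type*} [DecidableEq K] {G : SimpleGraph V}
  [DecidableRel G.Adj] {c : Sym2 V → K} {d k R : ℕ} {N : V → Finset V} {v y : V} {α : K}

/-- The neighbors joined to `u` by an edge of color `a`. -/
def colorNbrs (G : SimpleGraph V) [DecidableRel G.Adj] (c : Sym2 V → K) (u : V) (a : K) :
    Finset V :=
  {w | G.Adj u w ∧ c s(u, w) = a}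

theorem mem_colorNbrs {u w : V} {a : K} : w ∈ colorNbrs G c u a ↔ G.Adj u w ∧ c s(u, w) = a := by
  simp [colorNbrs]

theorem exists_forall_card_colorNbrs_le [Nonempty V] (G : SimpleGraph V) [DecidableRel G.Adj]
    (c : Sym2 V → K) : ∃ v α, ∀ x a, #(colorNbrs G c x a) ≤ #(colorNbrs G c v α) := by
  obtain ⟨⟨v, w⟩, -, hmax⟩ := exists_max_image (univ : Finset (V × V))
    (fun q => #(colorNbrs G c q.1 (c s(q.1, q.2)))) univ_nonempty
  refine ⟨v, c s(v, w), fun x a => ?_⟩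
  rcases (colorNbrs G c x a).eq_empty_or_nonempty with hempty | ⟨y, hy⟩
  · simp [hempty]
  · exact (mem_colorNbrs.1 hy).2 ▸ hmax (x, y) (mem_univ _)

variable [DecidableEq V]

/-- The selected neighbors `x` of `v` that do not separate `y` from `v`: the edges `xy` and `xv`
have the same color, so that `x` cannot close a rainbow path from `y` to `v` up to a rainbow
cycle. -/
def nonSeparating (G : SimpleGraph V) [DecidableRel G.Adj] (c : Sym2 V → K) (N : V → Finset V)
    (v y : V) : Finset V :=
  {x ∈ N v | y ∈ colorNbrs G c x (c s(x, v))}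

/-- The vertices that are neither selected at `v` nor joined to `v` by color `α`. -/
def remote (G : SimpleGraph V) [DecidableRel G.Adj] (c : Sym2 V → K) (N : V → Finset V) (v : V)
    (α : K) : Finset V :=
  (N v ∪ colorNbrs G c v α)ᶜ

namespace IsRainbowSelection

theorem sum_card_nonSeparating_le (h : IsRainbowSelection G c d N)
    (hR : ∀ x a, #(colorNbrs G c x a) ≤ R) (v : V) (Y : Finset V) :
    ∑ y ∈ Y, #(nonSeparating G c N v y) ≤ d * R :=
  calc
    _ = ∑ x ∈ N v, #{y ∈ Y | y ∈ colorNbrs G c x (c s(x, v))} :=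
      sum_card_bipartiteAbove_eq_sum_card_bipartiteBelow fun y x => y ∈ colorNbrs G c x (c s(x, v))
    _ ≤ #(N v) • R := sum_le_card_nsmul _ _ _ fun x _ =>
      (card_le_card fun y hy => (mem_filter.1 hy).2).trans (hR x _)
    _ = d * R := by rw [h.card_eq, smul_eq_mul]

theorem add_card_colorNbrs_le (h : IsRainbowSelection G c d N) (v : V) (α : K) :
    d + #(colorNbrs G c v α) ≤ #(N v ∪ colorNbrs G c v α) + 1 := by
  rw [← h.card_eq v, ← card_union_add_card_inter]
  gcongr
  refine card_le_one.2 fun x hx y hy => ?_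
  rw [mem_inter, mem_colorNbrs] at hx hy
  exact h.injOn v hx.1 hy.1 (hx.2.2.trans hy.2.2.symm)

/-- A common neighbor `x` of `y` and `v` closes a rainbow path from `y` to `v`, unless `x` or one
of the colors at `x` is already used, or `x` does not separate `y` from `v`. -/
theorem card_inter_union_colorNbrs_le (h : IsRainbowSelection G c d N)
    (hno : ¬ContainsRainbowCycle G c (k + 2)) (hk : 0 < k) (hy : y ∈ pathEnds G c v α k) :
    #(N y ∩ (N v ∪ colorNbrs G c v α)) ≤ #(nonSeparating G c N v y) + 3 * k + 2 := by
  obtain ⟨p, hp, hlen, hα⟩ := mem_pathEnds.1 hy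
  have hsupp := card_toFinset_support_le p
  have hcol := card_toFinset_colors_le c p
  set F := (p.edges.map c).toFinset
  have hinsert := card_insert_le α F
  have hused := h.card_filter_color_mem_le v F
  set W := p.support.toFinset ∪ (nonSeparating G c N v y ∪ {x ∈ N v | c s(v, x) ∈ F})
  have hW : #W ≤ (k + 1) + (#(nonSeparating G c N v y) + k) :=
    (card_union_le _ _).trans <| add_le_add (by omega) <|
      (card_union_le _ _).trans (by omega)
  by_contra! hlarge
  obtain ⟨x, hx, hxW, hxF⟩ := h.exists_mem_notMem_color_notMem (u := y)
    (S := N y ∩ (N v ∪ colorNbrs G c v α)) (W := W) (F := insert α F) inter_subset_left (by omega)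
  obtain ⟨hxy, hxv⟩ := mem_inter.1 hx
  simp only [W, F, mem_union, nonSeparating, mem_filter, mem_colorNbrs, List.mem_toFinset,
    mem_insert, not_or, not_and] at hxW hxF hxv
  subst hlen
  refine hno ?_
  rcases hxv with hxv | ⟨hvx, hcolor⟩
  · refine hp.containsRainbowCycle (h.adj hxy) (h.adj hxv) hxW.1 hxF.2 (hxW.2.2 hxv) ?_
    rw [Sym2.eq_swap, Sym2.eq_swap (a := v)]
    exact hxW.2.1 hxv (h.adj hxy).symm
  · exact hp.containsRainbowCycle (h.adj hxy) hvx hxW.1 hxF.2 (hcolor ▸ hα) (hcolor ▸ hxF.1)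

theorem le_card_inter_remote_add (h : IsRainbowSelection G c d N)
    (hno : ¬ContainsRainbowCycle G c (k + 2)) (hk : 0 < k) (hy : y ∈ pathEnds G c v α k) :
    d ≤ #(N y ∩ remote G c N v α) + (#(nonSeparating G c N v y) + 3 * k + 2) := by
  rw [← h.card_eq y, ← card_sdiff_add_card_inter (N y) (N v ∪ colorNbrs G c v α),
    sdiff_eq_inter_compl]
  exact Nat.add_le_add_left (h.card_inter_union_colorNbrs_le hno hk hy) _

theorem card_remote_sdiff_add_le (h : IsRainbowSelection G c d N) (hn : Fintype.card V < 2 * d)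
    (hno : ¬ContainsRainbowCycle G c (k + 2)) (hk : 0 < k) (hy : y ∈ pathEnds G c v α k) :
    #(remote G c N v α \ N y) + #(colorNbrs G c v α) ≤
      #(nonSeparating G c N v y) + 3 * k + 2 := by
  have hremote := card_compl_add_card (N v ∪ colorNbrs G c v α)
  have hlarge := h.add_card_colorNbrs_le v α
  have hsees := h.le_card_inter_remote_add hno hk hy
  have hsplit := card_inter_add_card_sdiff (remote G c N v α) (N y)
  rw [inter_comm, remote] at hsplit
  rw [remote] at hsees ⊢
  omega

end IsRainbowSelection

end Separation

section Layers

variable [DecidableEq V] {K : Type*} {G : SimpleGraph V} {c : Sym2 V → K}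
  {d ℓ m q R : ℕ} {N : V → Finset V} {S H Y : Finset V}

namespace IsRainbowSelection

/-- `S` and `H` cannot meet, since the neighbors of a common vertex would lie in both `H` and `Y`;
then `Y ∩ S` and `H` are almost the two sides of a bipartite graph. -/
theorem containsRainbowCycle_of_layers [Fintype V] (h : IsRainbowSelection G c d N) (hl : 4 ≤ ℓ)
    (hd : 216 * ℓ < d) (hn : Fintype.card V < 2 * d) (hS : d ≤ #S + 2 * ℓ) (hH : d ≤ #H + 2 * ℓ)
    (hY : d ≤ #Y + 2 * ℓ) (hSH : ∀ u ∈ S, #(N u \ H) ≤ 2 * ℓ) (hHY : ∀ u ∈ H, #(N u \ Y) ≤ 2 * ℓ)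
    (hinter : #(H ∩ Y) ≤ q) (hm : m ≤ 32 * ℓ) (hqm : q + 2 * m ≤ 124 * ℓ)
    (hq : q ≤ 100 * ℓ) (hYH : ∀ u ∈ H, #(Y \ N u) ≤ m) : ContainsRainbowCycle G c ℓ := by
  have hdisj : Disjoint S H := by
    refine disjoint_left.2 fun u huS huH => ?_
    have hcover : N u ⊆ (N u \ H) ∪ (N u \ Y) ∪ (H ∩ Y) := fun x hx => by
      simp only [mem_union, mem_sdiff, mem_inter]
      tauto
    have hcard := (card_le_card hcover).trans <|
      (card_union_le _ _).trans <| Nat.add_le_add_right (card_union_le _ _) _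
    have := hSH u huS
    have := hHY u huH
    have := h.card_eq u
    omega
  have hmeet : #((Y ∪ S) ∩ H) ≤ q := by
    rw [union_inter_distrib_right, disjoint_iff_inter_eq_empty.1 hdisj, union_empty, inter_comm]
    exact hinter
  have hSHn := (card_union_of_disjoint hdisj).symm.trans_le (card_le_univ (S ∪ H))
  have hYS := card_union_add_card_inter Y S
  have hYSH := card_union_add_card_inter (Y ∪ S) H
  have hYSHn := card_le_univ (Y ∪ S ∪ H)
  have hA : #(Y ∩ S) ≤ #S := card_le_card inter_subset_right
  refine h.containsRainbowCycle_of_nearly_bipartite (A := Y ∩ S) (B := H) (m := m) hl hd hn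
    (hdisj.mono_left inter_subset_right) hm (by omega) (by omega) (by omega) hH (by omega)
    (fun a ha => ?_) fun b hb => ?_
  · have := hSH a (mem_inter.1 ha).2
    have hN := card_sdiff_add_card_inter (N a) H
    have hH' := card_sdiff_add_card_inter H (N a)
    rw [inter_comm] at hH'
    rw [h.card_eq] at hN
    omega
  · exact (card_le_card (sdiff_subset_sdiff inter_subset_left subset_rfl)).trans (hYH b hb)

end IsRainbowSelection

/-- A weight `f` bounding, up to `3 * ℓ`, how far `N y` is from `Z` for each `y ∈ Y`, while being
at most `d * R` in total. It abstracts the number of nonseparating vertices, with `Z` the set of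
remote vertices and `R` the largest number of edges of one color at a vertex. -/
structure IsSeparationWeight (N : V → Finset V) (d ℓ R : ℕ) (f : V → ℕ) (Z Y : Finset V) :
    Prop where
  sum_le : ∀ T : Finset V, ∑ y ∈ T, f y ≤ d * R
  card_sdiff_add_le : ∀ y ∈ Y, #(Z \ N y) + R ≤ f y + 3 * ℓ
  le_card_inter_add : ∀ y ∈ Y, d ≤ #(N y ∩ Z) + f y + 3 * ℓ

variable {f : V → ℕ} {Z : Finset V}

namespace IsSeparationWeight

theorem sum_card_sdiff_add_le (hf : IsSeparationWeight N d ℓ R f Z Y) {T : Finset V} (hT : T ⊆ Y) :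
    ∑ y ∈ T, #(Z \ N y) + #T * R ≤ ∑ y ∈ T, f y + #T * (3 * ℓ) :=
  calc
    _ = ∑ y ∈ T, (#(Z \ N y) + R) := by rw [sum_add_distrib, sum_const, smul_eq_mul]
    _ ≤ ∑ y ∈ T, (f y + 3 * ℓ) := sum_le_sum fun y hy => hf.card_sdiff_add_le y (hT hy)
    _ = ∑ y ∈ T, f y + #T * (3 * ℓ) := by rw [sum_add_distrib, sum_const, smul_eq_mul]

theorem card_mul_le {r : ℕ} (hf : IsSeparationWeight N d ℓ (r + 3 * ℓ) f Z Y) :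
    #Y * r ≤ d * (r + 3 * ℓ) := by
  have := hf.sum_card_sdiff_add_le subset_rfl
  have := hf.sum_le Y
  rw [mul_add] at *
  omega

theorem card_le (hf : IsSeparationWeight N d ℓ R f Z Y) (hl : 0 < ℓ) (hd : 216 * ℓ < d)
    (hR : d ≤ 3 * R) : #Y ≤ d + 10 * ℓ := by
  obtain ⟨r, rfl⟩ : ∃ r, R = r + 3 * ℓ := ⟨R - 3 * ℓ, by omega⟩
  have hcard := hf.card_mul_le
  by_contra! hlarge
  have hr : ℓ * (10 * r) ≤ ℓ * (3 * d) := by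
    have := Nat.mul_le_mul_right r hlarge.le
    nlinarith
  have := Nat.le_of_mul_le_mul_left hr hl
  omega

end IsSeparationWeight

namespace IsRainbowSelection

theorem card_le_of_card_sdiff_le (h : IsRainbowSelection G c d N)
    (hno : ¬ContainsRainbowCycle G c ℓ) (hl : 3 ≤ ℓ) {T : Finset V}
    (hT : ∀ u ∈ T, #(T \ N u) ≤ 12 * ℓ) : #T ≤ 100 * ℓ := by
  by_contra! hlarge
  refine hno (h.containsRainbowCycle_of_sum_card_sdiff_le hl (Q := T) (M := #T * (12 * ℓ))
    (w := 48 * ℓ) (sum_le_card_nsmul _ _ _ hT) (by omega) ?_)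
  have := Nat.mul_le_mul_left (24 * ℓ) hlarge
  nlinarith

theorem card_inter_lt_of_isSeparationWeight (h : IsRainbowSelection G c d N)
    (hf : IsSeparationWeight N d ℓ R f Z Y) (hno : ¬ContainsRainbowCycle G c ℓ) (hl : 3 ≤ ℓ)
    (hd : 216 * ℓ < d) (hR : 3 * R < d) {u : V} (hu : #(N u \ Y) ≤ 2 * ℓ) :
    5 * #(N u ∩ Y ∩ Z) < 2 * d := by
  have hsplit := card_inter_add_card_sdiff (N u) Y
  rw [h.card_eq] at hsplit
  by_contra! hlarge
  refine hno (h.containsRainbowCycle_of_sum_card_sdiff_le hl (Q := N u ∩ Y ∩ Z)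
    (M := 2 * ℓ * R + 3 * ℓ * d) (w := 41 * ℓ) ?_ (by omega) (by nlinarith))
  have hsum := hf.sum_card_sdiff_add_le (T := N u ∩ Y) inter_subset_right
  have htotal := hf.sum_le (N u ∩ Y)
  have hle : ∑ y ∈ N u ∩ Y ∩ Z, #((N u ∩ Y ∩ Z) \ N y) ≤ ∑ y ∈ N u ∩ Y, #(Z \ N y) :=
    (sum_le_sum fun y _ => card_le_card (sdiff_subset_sdiff inter_subset_right subset_rfl)).trans
      (sum_le_sum_of_subset inter_subset_left)
  have hlower : d * R ≤ (#(N u ∩ Y) + 2 * ℓ) * R := Nat.mul_le_mul_right _ (by omega)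
  have hupper : #(N u ∩ Y) * (3 * ℓ) ≤ d * (3 * ℓ) := Nat.mul_le_mul_right _ (by omega)
  nlinarith

theorem three_mul_le_of_isSeparationWeight (h : IsRainbowSelection G c d N)
    (hf : IsSeparationWeight N d ℓ R f Z Y) (hno : ¬ContainsRainbowCycle G c ℓ) (hl : 3 ≤ ℓ)
    (hd : 216 * ℓ < d) (hR : 3 * R < d) {u : V} (huY : u ∈ Y) (hu : #(N u \ Y) ≤ 2 * ℓ) :
    3 * d ≤ 5 * f u + 25 * ℓ := by
  have hcover : N u ∩ Z ⊆ (N u ∩ Y ∩ Z) ∪ (N u \ Y) := fun x hx => by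
    simp only [mem_union, mem_inter, mem_sdiff] at hx ⊢
    tauto
  have := (card_le_card hcover).trans (card_union_le _ _)
  have := h.card_inter_lt_of_isSeparationWeight hf hno hl hd hR hu
  have := hf.le_card_inter_add u huY
  omega

theorem card_le_of_isSeparationWeight [Fintype V] (h : IsRainbowSelection G c d N)
    (hf : IsSeparationWeight N d ℓ R f Z Y) (hno : ¬ContainsRainbowCycle G c ℓ) (hl : 3 ≤ ℓ)
    (hd : 216 * ℓ < d) (hn : Fintype.card V < 2 * d) (hR : 3 * R < d) (hY : d ≤ #Y + 2 * ℓ)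
    {T : Finset V} (hTY : T ⊆ Y) (hT : ∀ u ∈ T, #(N u \ Y) ≤ 2 * ℓ) : #T ≤ 28 * ℓ := by
  obtain ⟨t, ht⟩ : ∃ t, t + 30 * ℓ = 4 * d := ⟨4 * d - 30 * ℓ, by omega⟩
  have hheavy : ∑ y ∈ T, (15 * R + t) ≤ ∑ y ∈ T, (15 * f y + 45 * ℓ) := sum_le_sum fun y hy => by
    have := h.three_mul_le_of_isSeparationWeight hf hno hl hd hR (hTY hy) (hT y hy)
    omega
  have hlight : ∑ y ∈ Y \ T, 15 * R ≤ ∑ y ∈ Y \ T, (15 * f y + 45 * ℓ) := sum_le_sum fun y hy => by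
    have := hf.card_sdiff_add_le y (mem_sdiff.1 hy).1
    omega
  have htotal : #Y * (15 * R) + #T * t ≤ 15 * (d * R) + #Y * (45 * ℓ) := by
    have hsum := hf.sum_le Y
    have hcard := card_sdiff_add_card_eq_card hTY
    rw [← sum_sdiff hTY] at hsum
    simp only [sum_add_distrib, ← mul_sum, sum_const, smul_eq_mul] at hheavy hlight
    nlinarith
  by_contra! hlarge
  have hYn : #Y * (45 * ℓ) ≤ 2 * d * (45 * ℓ) :=
    Nat.mul_le_mul_right _ ((card_le_univ Y).trans hn.le)
  have hlower : d * R ≤ (#Y + 2 * ℓ) * R := Nat.mul_le_mul_right _ hY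
  have hT : 28 * ℓ * t ≤ #T * t := Nat.mul_le_mul_right _ hlarge.le
  have hRd : ℓ * (3 * R) ≤ ℓ * d := Nat.mul_le_mul_left _ hR.le
  have hbound : ℓ * (28 * t) ≤ ℓ * (100 * d) := by nlinarith
  have := Nat.le_of_mul_le_mul_left hbound (by omega)
  omega

theorem containsRainbowCycle_of_isSeparationWeight [Fintype V]
    (h : IsRainbowSelection G c d N) (hf : IsSeparationWeight N d ℓ R f Z Y) (hl : 4 ≤ ℓ)
    (hd : 216 * ℓ < d) (hn : Fintype.card V < 2 * d) (hS : d ≤ #S + 2 * ℓ) (hH : d ≤ #H + 2 * ℓ)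
    (hY : d ≤ #Y + 2 * ℓ) (hSH : ∀ u ∈ S, #(N u \ H) ≤ 2 * ℓ)
    (hHY : ∀ u ∈ H, #(N u \ Y) ≤ 2 * ℓ) : ContainsRainbowCycle G c ℓ := by
  by_contra hno
  have hmissing : ∀ u ∈ H, #(Y \ N u) + d ≤ #Y + 2 * ℓ := fun u hu => by
    have := hHY u hu
    have hN := card_inter_add_card_sdiff (N u) Y
    have hY := card_inter_add_card_sdiff Y (N u)
    rw [h.card_eq, inter_comm] at hN
    omega
  rcases le_or_gt d (3 * R) with hR | hR
  · have hYd := hf.card_le (by omega) hd hR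
    have hYH : ∀ u ∈ H, #(Y \ N u) ≤ 12 * ℓ := fun u hu => by
      have := hmissing u hu
      omega
    have hinter : #(H ∩ Y) ≤ 100 * ℓ := h.card_le_of_card_sdiff_le hno (by omega) fun u hu =>
      (card_le_card (sdiff_subset_sdiff inter_subset_right subset_rfl)).trans
        (hYH u (mem_inter.1 hu).1)
    exact hno (h.containsRainbowCycle_of_layers hl hd hn hS hH hY hSH hHY hinter (by omega)
      (by omega) le_rfl hYH)
  · have hinter : #(H ∩ Y) ≤ 28 * ℓ :=
      h.card_le_of_isSeparationWeight hf hno (by omega) hd hn hR hY inter_subset_right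
        fun u hu => hHY u (mem_inter.1 hu).1
    have hYH : ∀ u ∈ H, #(Y \ N u) ≤ 32 * ℓ := fun u hu => by
      have := hmissing u hu
      have := card_union_add_card_inter H Y
      have := card_le_univ (H ∪ Y)
      omega
    exact hno (h.containsRainbowCycle_of_layers hl hd hn hS hH hY hSH hHY hinter le_rfl
      (by omega) (by omega) hYH)

end IsRainbowSelection

end Layers

section Separates

variable [Fintype V] {K : Type*} [DecidableEq K] {G : SimpleGraph V} [DecidableRel G.Adj]
  {c : Sym2 V → K} {d k R t : ℕ} {N : V → Finset V} {v x y : V} {α : K}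

/-- The vertex `x` separates `y` from `v`: it is joined to `y` by an edge whose color differs from
that of `xv`. -/
abbrev Separates (G : SimpleGraph V) (c : Sym2 V → K) (v x y : V) : Prop :=
  G.Adj x y ∧ c s(x, y) ≠ c s(x, v)

namespace IsRainbowSelection

theorem le_card_filter_separates_add (h : IsRainbowSelection G c d N) (hx : x ∈ N v)
    (hα : c s(v, x) ≠ α) : d ≤ #{y ∈ pathEnds G c v α 2 | Separates G c v x y} + 4 := by
  classical
  have hp := (isRainbowPath_nil c v).cons (h.adj hx).symm (by simpa using (h.adj hx).ne')
    (by simp)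
  have hmissed := h.card_sdiff_filter_pathEnds_succ_le (α := α) hp
    (by simpa [Sym2.eq_swap] using hα.symm)
  simp only [SimpleGraph.Walk.edges_cons, SimpleGraph.Walk.edges_nil, List.map_cons, List.map_nil,
    List.mem_singleton, SimpleGraph.Walk.length_cons, SimpleGraph.Walk.length_nil, zero_add,
    Nat.reduceAdd, Nat.reduceMul] at hmissed
  have hsplit := card_inter_add_card_sdiff (N x) {y ∈ pathEnds G c v α 2 | ¬c s(x, y) = c s(x, v)}
  have hsub : N x ∩ {y ∈ pathEnds G c v α 2 | ¬c s(x, y) = c s(x, v)} ⊆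
      {y ∈ pathEnds G c v α 2 | Separates G c v x y} := fun y hy => by
    simp only [mem_inter, mem_filter] at hy ⊢
    exact ⟨hy.2.1, h.adj hy.1, hy.2.2⟩
  have := card_le_card hsub
  rw [h.card_eq] at hsplit
  omega

theorem card_filter_separates_le (h : IsRainbowSelection G c d N)
    (hno : ¬ContainsRainbowCycle G c (k + 2)) (hR : ∀ a, #(colorNbrs G c y a) ≤ R)
    (hy : y ∈ pathEnds G c v α k) :
    #{x ∈ N v | Separates G c v x y} ≤ k * R + 2 * k + 1 := by
  classical
  obtain ⟨p, hp, rfl, -⟩ := mem_pathEnds.1 hy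
  set F := (p.edges.map c).toFinset
  have hcol : #F ≤ p.length := card_toFinset_colors_le c p
  have hcover : {x ∈ N v | Separates G c v x y} ⊆
      p.support.toFinset ∪ ({x ∈ N v | c s(v, x) ∈ F} ∪ F.biUnion (colorNbrs G c y)) := by
    intro x hx
    obtain ⟨hxv, hxy, hsep⟩ := mem_filter.1 hx
    by_contra hfree
    simp only [F, mem_union, mem_filter, mem_biUnion, mem_colorNbrs, List.mem_toFinset, not_or,
      not_and, not_exists] at hfree
    refine hno (hp.containsRainbowCycle hxy.symm (h.adj hxv) hfree.1
      (fun hmem => hfree.2.2 _ hmem hxy.symm rfl) (hfree.2.1 hxv) ?_)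
    rwa [Sym2.eq_swap, Sym2.eq_swap (a := v)]
  calc
    _ ≤ #p.support.toFinset + (#{x ∈ N v | c s(v, x) ∈ F} + #(F.biUnion (colorNbrs G c y))) :=
      (card_le_card hcover).trans <| (card_union_le _ _).trans <|
        Nat.add_le_add_left (card_union_le _ _) _
    _ ≤ (p.length + 1) + (p.length + p.length * R) := by
      gcongr
      · exact card_toFinset_support_le p
      · exact (h.card_filter_color_mem_le v F).trans hcol
      · exact (card_biUnion_le_card_mul _ _ _ fun a _ => hR a).trans (Nat.mul_le_mul_right R hcol)
    _ = _ := by ring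

theorem le_four_mul_add_of_card_colorNbrs_le (h : IsRainbowSelection G c d N)
    (hn : Fintype.card V < 2 * d) (hno : ¬ContainsRainbowCycle G c 4)
    (hR : ∀ x a, #(colorNbrs G c x a) ≤ R) (v : V) : d ≤ 4 * R + 14 := by
  classical
  obtain ⟨α⟩ : Nonempty K := ⟨c s(v, v)⟩
  have hcount := card_mul_le_card_mul (s := {x ∈ N v | c s(v, x) ≠ α}) (t := pathEnds G c v α 2)
    (Separates G c v) (m := d - 4) (n := 2 * R + 5)
    (fun x hx => Nat.sub_le_of_le_add <|
      h.le_card_filter_separates_add (mem_filter.1 hx).1 (mem_filter.1 hx).2)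
    (fun y hy => (card_le_card (filter_subset_filter _ (filter_subset _ _))).trans
      (h.card_filter_separates_le hno (hR y) hy))
  have hX : d ≤ #{x ∈ N v | c s(v, x) ≠ α} + 1 := by
    have hone := h.card_filter_color_mem_le v {α}
    simp only [mem_singleton, card_singleton] at hone
    rw [← h.card_eq v, ← card_filter_add_card_filter_not fun x => c s(v, x) = α, add_comm]
    gcongr
  have hY := (card_le_univ (pathEnds G c v α 2)).trans hn.le
  by_contra! hlarge
  obtain ⟨e, rfl⟩ : ∃ e, d = e + 4 := ⟨d - 4, by omega⟩
  have hlower : (e + 3) * e ≤ #{x ∈ N v | c s(v, x) ≠ α} * e := Nat.mul_le_mul_right _ (by omega)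
  have hupper := Nat.mul_le_mul_right (2 * R + 5) hY
  have hR : (e + 4) * (4 * R + 10) ≤ (e + 4) * (e - 1) := Nat.mul_le_mul_left _ (by omega)
  obtain ⟨r, rfl⟩ : ∃ r, e = r + 1 := ⟨e - 1, by omega⟩
  rw [Nat.add_sub_cancel] at *
  nlinarith

theorem sum_card_nonSeparating_pathEnds_two_le [DecidableEq V] (h : IsRainbowSelection G c d N)
    (hR : ∀ x a, #(colorNbrs G c x a) ≤ R) (ht : #(pathEnds G c v α 2) ≤ d + t) :
    ∑ y ∈ pathEnds G c v α 2, #(nonSeparating G c N v y) ≤ d * (t + 4) + R := by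
  have hterm : ∀ x ∈ N v, #{y ∈ pathEnds G c v α 2 | y ∈ colorNbrs G c x (c s(x, v))} ≤
      (t + 4) + if c s(v, x) = α then R else 0 := fun x hx => by
    split_ifs with hα
    · exact ((card_le_card fun y hy => (mem_filter.1 hy).2).trans (hR x _)).trans
        (Nat.le_add_left _ _)
    · have hsep := h.le_card_filter_separates_add hx hα
      have hdisj : Disjoint {y ∈ pathEnds G c v α 2 | y ∈ colorNbrs G c x (c s(x, v))}
          {y ∈ pathEnds G c v α 2 | Separates G c v x y} :=
        disjoint_filter.2 fun y _ hy hsep => hsep.2 (mem_colorNbrs.1 hy).2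
      have := (card_union_of_disjoint hdisj).symm.trans_le
        (card_le_card (union_subset (filter_subset _ _) (filter_subset _ _)))
      omega
  calc
    _ = ∑ x ∈ N v, #{y ∈ pathEnds G c v α 2 | y ∈ colorNbrs G c x (c s(x, v))} :=
      sum_card_bipartiteAbove_eq_sum_card_bipartiteBelow fun y x => y ∈ colorNbrs G c x (c s(x, v))
    _ ≤ ∑ x ∈ N v, ((t + 4) + if c s(v, x) = α then R else 0) := sum_le_sum hterm
    _ = d * (t + 4) + #{x ∈ N v | c s(v, x) = α} * R := by
      rw [sum_add_distrib, ← sum_filter, sum_const, sum_const, h.card_eq, smul_eq_mul, smul_eq_mul]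
    _ ≤ d * (t + 4) + R := by
      have hone := h.card_filter_color_mem_le v {α}
      simp only [mem_singleton, card_singleton] at hone
      exact Nat.add_le_add_left (mul_le_of_le_one_left (Nat.zero_le R) hone) _

theorem isSeparationWeight_card_nonSeparating [DecidableEq V] (h : IsRainbowSelection G c d N)
    (hn : Fintype.card V < 2 * d) (hno : ¬ContainsRainbowCycle G c (k + 2)) (hk : 0 < k)
    (hmax : ∀ x a, #(colorNbrs G c x a) ≤ #(colorNbrs G c v α)) :
    IsSeparationWeight N d (k + 2) #(colorNbrs G c v α) (fun y => #(nonSeparating G c N v y))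
      (remote G c N v α) (pathEnds G c v α k) where
  sum_le := h.sum_card_nonSeparating_le hmax v
  card_sdiff_add_le _ hy := by
    have := h.card_remote_sdiff_add_le hn hno hk hy
    omega
  le_card_inter_add _ hy := by
    have := h.le_card_inter_remote_add hno hk hy
    omega

end IsRainbowSelection

end Separates

section Cycles

variable [Fintype V] [Nonempty V] {K : Type*} {G : SimpleGraph V} {c : Sym2 V → K}
  {N : V → Finset V} {d ℓ : ℕ}

namespace IsRainbowSelection

theorem containsRainbowCycle_four (h : IsRainbowSelection G c d N)
    (hd : 864 < d) (hn : Fintype.card V < 2 * d) : ContainsRainbowCycle G c 4 := by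
  classical
  obtain ⟨v, α, hmax⟩ := exists_forall_card_colorNbrs_le G c
  by_contra hno
  have hR := h.le_four_mul_add_of_card_colorNbrs_le hn hno hmax v
  have hf := h.isSeparationWeight_card_nonSeparating hn hno two_pos hmax
  generalize #(colorNbrs G c v α) = R at *
  have hlower := h.le_card_pathEnds_succ_add v α (k := 1) (by omega)
  have hupper : #(pathEnds G c v α 2) ≤ d + 52 := by
    obtain ⟨r, rfl⟩ : ∃ r, R = r + 3 * 4 := ⟨R - 12, by omega⟩
    have hcard := hf.card_mul_le
    by_contra! hlarge
    have := Nat.mul_le_mul_right r hlarge.le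
    nlinarith
  have hsum := h.sum_card_nonSeparating_pathEnds_two_le hmax hupper
  have hweight := (Nat.le_add_left _ _).trans (hf.sum_card_sdiff_add_le subset_rfl)
  nlinarith

theorem containsRainbowCycle_of_five_le (h : IsRainbowSelection G c d N)
    (hl : 5 ≤ ℓ) (hd : 216 * ℓ < d) (hn : Fintype.card V < 2 * d) :
    ContainsRainbowCycle G c ℓ := by
  obtain ⟨k, rfl⟩ : ∃ k, ℓ = k + 5 := ⟨ℓ - 5, by omega⟩
  classical
  obtain ⟨v, α, hmax⟩ := exists_forall_card_colorNbrs_le G c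
  by_contra hno
  have hf := h.isSeparationWeight_card_nonSeparating hn hno (by omega) hmax
  have hlayer : ∀ i ≤ k + 2, d ≤ #(pathEnds G c v α (i + 1)) + 2 * (k + 5) := fun i hi => by
    have := h.le_card_pathEnds_succ_add v α (k := i) (by omega)
    omega
  have hstep : ∀ i ≤ k + 2, ∀ u ∈ pathEnds G c v α i,
      #(N u \ pathEnds G c v α (i + 1)) ≤ 2 * (k + 5) := fun i hi u hu =>
    (h.card_sdiff_pathEnds_succ_le hu).trans (by omega)
  exact hno (h.containsRainbowCycle_of_isSeparationWeight hf (by omega) hd hn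
    (hlayer k (by omega)) (hlayer (k + 1) (by omega)) (hlayer (k + 2) le_rfl)
    (hstep (k + 1) (by omega)) (hstep (k + 2) le_rfl))

end IsRainbowSelection

end Cycles

theorem stmt9_general {K : Type*} [Fintype V] [Nonempty V] {G : SimpleGraph V} {c : Sym2 V → K}
    {d ℓ : ℕ} (hl : 3 ≤ ℓ) (hd : 216 * ℓ < d) (hn : Fintype.card V < 2 * d)
    (hδ : ∀ v, d ≤ ((fun u => c s(v, u)) '' G.neighborSet v).ncard) :
    ContainsRainbowCycle G c ℓ := by
  obtain ⟨N, hN⟩ := exists_isRainbowSelection hδ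
  rcases (show ℓ = 3 ∨ ℓ = 4 ∨ 5 ≤ ℓ by omega) with rfl | rfl | hl
  · exact hN.containsRainbowCycle_three hn
  · exact hN.containsRainbowCycle_four hd hn
  · exact hN.containsRainbowCycle_of_five_le hl hd hn

theorem minColorDeg_le_ncard_image (G : SimpleGraph V) (c : Sym2 V → ℕ) (v : V) :
    minColorDeg G c ≤ ((fun u => c s(v, u)) '' G.neighborSet v).ncard := by
  refine (ciInf_le (OrderBot.bddBelow _) v).trans_eq (congrArg Set.ncard (Set.ext fun a => ?_))
  simp only [Set.mem_ofPred_eq, Set.mem_image, SimpleGraph.mem_neighborSet, G.adj_comm v,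
    Sym2.eq_swap (a := v)]

theorem stmt9 (ℓ : ℕ) (hl : 3 ≤ ℓ) [Fintype V] (G : SimpleGraph V) (c : Sym2 V → ℕ)
    (hn : 432 * ℓ < Fintype.card V)
    (hδ : ((Fintype.card V : ℚ) + 1) / 2 ≤ (minColorDeg G c : ℚ)) :
    HasRainbowCycle G c ℓ := by
  have : Nonempty V := Fintype.card_pos_iff.1 (by omega)
  have hd : Fintype.card V < 2 * minColorDeg G c := by
    exact_mod_cast (lt_add_one _).trans_le ((div_le_iff₀' two_pos).1 hδ)
  exact stmt9_general hl (by omega) hd (minColorDeg_le_ncard_image G c)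
end
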